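/- Let Z ⊆ ℙ^{r'} (over ℂ) be a smooth Severi variety (projectable, with dim(Z) = (2/3)(r' − 2)), let b ≥ 0, set N = r' + b, let Z' ⊆ ℙ^{N+1} be the cone over Z with vertex a linear ℙ^b, and let X ⊆ ℙ^N be the generic (isomorphic) projection of Z'. Then dim(X) = (1/3)(2N + b − 1), dim Sing(X) = b, and X is not linearly normal. In particular the bound dim(X) > (1/3)(2N + b − 1) in Corollary 4 is sharp. -/

import Mathlib

/- Background for [Lopez-Ran, "On the irreducibility of secant cones, and an application
to linear normality"]: a concrete model of complex projective geometry.  Projective space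
`ℙ^r(ℂ)` is the projectivization of `ℂ^{r+1}`, equipped with the Zariski topology;
subvarieties are (closed, irreducible) subsets; tangent spaces, smoothness, the invariant
`σ(Y)`, secant varieties/cones, generic linear projections and their double loci, and
linear normality are all defined from first principles below. -/

open MvPolynomial Set

noncomputable section

/-- Complex projective space of lines in `ℂⁿ` (so of projective dimension `n - 1`). -/
abbrev PrV (n : ℕ) : Type := Projectivization ℂ (Fin n → ℂ)

/-- `ℙ^r` over `ℂ`. -/
abbrev Pr (r : ℕ) : Type := PrV (r + 1)

/-- The vanishing locus in projective space of a polynomial, defined via all nonzero lifts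
(for a homogeneous polynomial this is the usual projective zero locus). -/
def pZero {n : ℕ} (f : MvPolynomial (Fin n) ℂ) : Set (PrV n) :=
  {x | ∀ v : Fin n → ℂ, ∀ hv : v ≠ 0, Projectivization.mk ℂ v hv = x → eval v f = 0}

/-- The Zariski topology on complex projective space. -/
instance prTop (n : ℕ) : TopologicalSpace (PrV n) :=
  TopologicalSpace.generateFrom {U | ∃ f : MvPolynomial (Fin n) ℂ, U = (pZero f)ᶜ}

/-- The Zariski topology on the affine space `ℂ^σ`. -/
def affTop (σ : Type) : TopologicalSpace (σ → ℂ) :=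
  TopologicalSpace.generateFrom {U | ∃ f : MvPolynomial σ ℂ, U = {v | eval v f ≠ 0}}

/-- A property holds generically (on a dense Zariski-open set) on the affine space `ℂ^σ`. -/
def GenericAff {σ : Type} (P : (σ → ℂ) → Prop) : Prop :=
  ∃ U : Set (σ → ℂ), @IsOpen _ (affTop σ) U ∧ @Dense _ (affTop σ) U ∧ ∀ v ∈ U, P v

/-- The projective line through two points (their linear span); for `x = y` this is `{x}`. -/
def lineThrough {n : ℕ} (x y : PrV n) : Set (PrV n) :=
  {z | z.rep ∈ Submodule.span ℂ ({x.rep, y.rep} : Set (Fin n → ℂ))}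

/-- The projective linear subspace associated to a linear subspace `W ⊆ ℂⁿ`. -/
def projSub {n : ℕ} (W : Submodule ℂ (Fin n → ℂ)) : Set (PrV n) := {x | x.rep ∈ W}

/-- The secant variety of `Y`: the (closure of the) union of all lines spanned by pairs of
distinct points of `Y`, i.e. the union of all secant lines of `Y`. -/
def secantVariety {n : ℕ} (Y : Set (PrV n)) : Set (PrV n) :=
  closure (⋃ x ∈ Y, ⋃ y ∈ Y, ⋃ _ : x ≠ y, lineThrough x y)

/-- `Y` is projectable if its secant variety is not all of projective space. -/
def Projectable {n : ℕ} (Y : Set (PrV n)) : Prop := secantVariety Y ≠ Set.univ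

/-- Hyperplanes in projective space. -/
def IsHyperplane {n : ℕ} (H : Set (PrV n)) : Prop :=
  ∃ φ : (Fin n → ℂ) →ₗ[ℂ] ℂ, φ ≠ 0 ∧ H = {x | φ x.rep = 0}

/-- A set in projective space is nondegenerate if it is contained in no hyperplane. -/
def NondegenerateSet {n : ℕ} (Y : Set (PrV n)) : Prop :=
  ∀ H : Set (PrV n), IsHyperplane H → ¬ Y ⊆ H

/-- Dimension of a subset of projective space: the Krull dimension of the subspace
topology. -/
def pdim {n : ℕ} (S : Set (PrV n)) : WithBot ℕ∞ := topologicalKrullDim S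

/-- The homogeneous ideal of `Y` (as a set): all polynomials all of whose lifts vanish on
the affine cone of `Y`. -/
def homIdeal {n : ℕ} (Y : Set (PrV n)) : Set (MvPolynomial (Fin n) ℂ) := {f | Y ⊆ pZero f}

/-- The differential of a polynomial at a point of `ℂⁿ`, as a linear form. -/
def jacLin {n : ℕ} (f : MvPolynomial (Fin n) ℂ) (v : Fin n → ℂ) : (Fin n → ℂ) →ₗ[ℂ] ℂ :=
  ∑ i, eval v (pderiv i f) • LinearMap.proj i

/-- The affine tangent space of the cone over `Y` at `v`: the common kernel of the
differentials of all elements of the homogeneous ideal of `Y`. -/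
def affTangent {n : ℕ} (Y : Set (PrV n)) (v : Fin n → ℂ) : Submodule ℂ (Fin n → ℂ) :=
  ⨅ f ∈ homIdeal Y, LinearMap.ker (jacLin f v)

/-- The embedded projective tangent space `T_x Y ⊆ ℙⁿ⁻¹`. -/
def projTangent {n : ℕ} (Y : Set (PrV n)) (x : PrV n) : Set (PrV n) :=
  projSub (affTangent Y x.rep)

/-- `x` is a smooth point of `Y` if the affine tangent space of the cone has the expected
dimension `dim Y + 1`. -/
def IsSmoothPt {n : ℕ} (Y : Set (PrV n)) (x : PrV n) : Prop :=
  ((Module.finrank ℂ (affTangent Y x.rep) : ℕ∞) : WithBot ℕ∞) = pdim Y + 1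

/-- The smooth locus `Y_smooth` of `Y`. -/
def smoothLocus {n : ℕ} (Y : Set (PrV n)) : Set (PrV n) := {x ∈ Y | IsSmoothPt Y x}

/-- The singular locus of `Y`. -/
def singLocus {n : ℕ} (Y : Set (PrV n)) : Set (PrV n) := Y \ smoothLocus Y

/-- `Y` is smooth if every point of `Y` is a smooth point. -/
def IsSmoothSet {n : ℕ} (Y : Set (PrV n)) : Prop := ∀ x ∈ Y, IsSmoothPt Y x

/-- A divisor on `Y`: an irreducible closed subvariety of `Y` of codimension one. -/
def IsDivisorOn {n : ℕ} (W Y : Set (PrV n)) : Prop :=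
  W ⊆ Y ∧ IsIrreducible W ∧ closure W ∩ Y = W ∧ pdim W + 1 = pdim Y

/-- `σ(Y)`: the maximal dimension of a subvariety `Z` of the smooth locus of `Y` which
contains a generic point of some divisor on `Y` (i.e. is dense in some divisor), and such
that all embedded tangent spaces `T_y Y`, `y ∈ Z`, lie in a fixed hyperplane. -/
def sigmaY {n : ℕ} (Y : Set (PrV n)) : WithBot ℕ∞ :=
  sSup { d | ∃ Z : Set (PrV n), Z ⊆ smoothLocus Y ∧ IsIrreducible Z ∧
      (∃ W, IsDivisorOn W Y ∧ W ⊆ closure (Z ∩ W)) ∧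
      (∃ H, IsHyperplane H ∧ ∀ y ∈ Z, projTangent Y y ⊆ H) ∧ pdim Z = d }

/-- The ideal of polynomials vanishing (in all lifts) on the affine cone over `Y`. -/
def idealOf {n : ℕ} (Y : Set (PrV n)) : Ideal (MvPolynomial (Fin n) ℂ) where
  carrier := homIdeal Y
  add_mem' := by
    intro f g hf hg x hx v hv hvx
    have h1 := hf hx v hv hvx
    have h2 := hg hx v hv hvx
    simp [map_add, h1, h2]
  zero_mem' := by intro x hx v hv hvx; simp
  smul_mem' := by
    intro c f hf x hx v hv hvx
    have h1 := hf hx v hv hvx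
    simp [smul_eq_mul, map_mul, h1]

instance kerEvalPrime {n : ℕ} (v : Fin n → ℂ) :
    (RingHom.ker ((aeval v : MvPolynomial (Fin n) ℂ →ₐ[ℂ] ℂ) :
      MvPolynomial (Fin n) ℂ →+* ℂ)).IsPrime :=
  RingHom.ker_isPrime _

/-- The local ring of the affine space `ℂⁿ` at the point `v`. -/
abbrev polyAtPoint {n : ℕ} (v : Fin n → ℂ) : Type :=
  Localization.AtPrime (RingHom.ker ((aeval v : MvPolynomial (Fin n) ℂ →ₐ[ℂ] ℂ) :
    MvPolynomial (Fin n) ℂ →+* ℂ))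

/-- The local ring of the affine cone over `Y` at a (nonzero) point `v` of the cone. -/
abbrev coneLocalRing {n : ℕ} (Y : Set (PrV n)) (v : Fin n → ℂ) : Type :=
  polyAtPoint v ⧸
    (Ideal.map (algebraMap (MvPolynomial (Fin n) ℂ) (polyAtPoint v)) (idealOf Y))

/-- A normal (irreducible, closed) subvariety of projective space: all local rings of its
affine cone at points of the punctured cone are integrally closed domains. -/
def IsNormalVariety {n : ℕ} (Y : Set (PrV n)) : Prop :=
  IsClosed Y ∧ IsIrreducible Y ∧
    ∀ x ∈ Y, IsDomain (coneLocalRing Y x.rep) ∧ IsIntegrallyClosed (coneLocalRing Y x.rep)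

/-- The scheme-theoretic double locus of the projection of `Y` away from the projective
linear subspace `ℙ(W)`: points `y ∈ Y` such that the fibre of the projection through `y`
(the span of `ℙ(W)` and `y`) meets `Y` in a subscheme different from the single reduced
point `y`: either it contains a second point of `Y`, or it is tangent to `Y` at `y`. -/
def doubleLocus {r : ℕ} (Y : Set (Pr r)) (W : Submodule ℂ (Fin (r+1) → ℂ)) : Set (Pr r) :=
  {y | y ∈ Y ∧
    ((∃ y' ∈ Y, y' ≠ y ∧ y'.rep ∈ W ⊔ Submodule.span ℂ {y.rep}) ∨
      affTangent Y y.rep ⊓ (W ⊔ Submodule.span ℂ {y.rep}) ≠ Submodule.span ℂ {y.rep})}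

/-- The linear subspace spanned by a `(k+1)`-tuple of vectors of `ℂ^{r+1}` (used to
parametrize generic linear subspaces of projective dimension `k`). -/
def spanOfTuple {r k : ℕ} (v : Fin (k+1) × Fin (r+1) → ℂ) :
    Submodule ℂ (Fin (r+1) → ℂ) :=
  Submodule.span ℂ (Set.range fun i : Fin (k+1) => fun j => v (i, j))

/-- The secant cone of `Y` at `z`: the closure of the union of all secant lines of `Y`
passing through `z`. -/
def secantCone {r : ℕ} (Y : Set (Pr r)) (z : Pr r) : Set (Pr r) :=
  closure (⋃ x ∈ Y, ⋃ y ∈ Y, ⋃ _ : x ≠ y, ⋃ _ : z ∈ lineThrough x y, lineThrough x y)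

/-- `Y` has the irreducible secant cone (ISC) property: the secant cone of `Y` at a generic
point of `ℙ^r` (equivalently, the generic fibre of `f : I_Y → ℙ^r`) is irreducible. -/
def ISC {r : ℕ} (Y : Set (Pr r)) : Prop :=
  ∃ U : Set (Pr r), IsOpen U ∧ Dense U ∧ ∀ z ∈ U, IsIrreducible (secantCone Y z)

/-- The outer (Segre) product of two vectors. -/
def outerVec {a b : ℕ} (v : Fin a → ℂ) (w : Fin b → ℂ) : Fin (a * b) → ℂ :=
  fun k => v (finProdFinEquiv.symm k).1 * w (finProdFinEquiv.symm k).2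

lemma outerVec_ne_zero {a b : ℕ} {v : Fin a → ℂ} {w : Fin b → ℂ}
    (hv : v ≠ 0) (hw : w ≠ 0) : outerVec v w ≠ 0 := by
  obtain ⟨i, hi⟩ := Function.ne_iff.mp hv
  obtain ⟨j, hj⟩ := Function.ne_iff.mp hw
  intro h
  have h2 := congrFun h (finProdFinEquiv (i, j))
  simp only [outerVec, Equiv.symm_apply_apply, Pi.zero_apply] at h2
  rcases mul_eq_zero.mp h2 with h3 | h3
  · exact hi h3
  · exact hj h3

/-- The Segre embedding of a product of projective spaces. -/
def segre {a b : ℕ} (p : PrV a × PrV b) : PrV (a * b) :=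
  Projectivization.mk ℂ (outerVec p.1.rep p.2.rep)
    (outerVec_ne_zero p.1.rep_nonzero p.2.rep_nonzero)

/-- The Zariski topology on a product of two projective spaces (induced via the Segre
embedding). -/
def pairTop (r : ℕ) : TopologicalSpace (Pr r × Pr r) :=
  TopologicalSpace.induced segre (prTop ((r+1) * (r+1)))

/-- Zariski closure in the product of two projective spaces. -/
def closureP {r : ℕ} (S : Set (Pr r × Pr r)) : Set (Pr r × Pr r) :=
  segre ⁻¹' closure (segre '' S)

/-- Zariski irreducibility of a subset of the product of two projective spaces. -/
def IsIrreducibleP {r : ℕ} (S : Set (Pr r × Pr r)) : Prop :=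
  IsIrreducible (closure (segre '' S))

/-- Zariski connectedness of a subset of the product of two projective spaces. -/
def IsConnectedP {r : ℕ} (S : Set (Pr r × Pr r)) : Prop :=
  IsConnected (segre '' S)

/-- Dimension of a subset of the product of two projective spaces. -/
def pdimP {r : ℕ} (S : Set (Pr r × Pr r)) : WithBot ℕ∞ := pdim (segre '' S)

/-- The (ordered-pairs model of the) fibre of `f : I_Y → ℙ^r` over `z ∈ ℙ^r`: pairs of
distinct points of `Y` whose secant line passes through `z`, together with limits of such
(the secant cone of `Y` at `z`, upstairs). -/
def secPairs {r : ℕ} (Y : Set (Pr r)) (z : Pr r) : Set (Pr r × Pr r) :=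
  {p | p.1 ∈ Y ∧ p.2 ∈ Y ∧ p.1 ≠ p.2 ∧ z ∈ lineThrough p.1 p.2}

/-- The fibre of `f : I_Y → ℙ^r` over `z` (with its limit points). -/
def secFiber {r : ℕ} (Y : Set (Pr r)) (z : Pr r) : Set (Pr r × Pr r) :=
  closureP (secPairs Y z)

/-- The linear map `ℂ^b → ℂ^a` given by a matrix of coefficients. -/
def matLin {a b : ℕ} (w : Fin a × Fin b → ℂ) : (Fin b → ℂ) →ₗ[ℂ] (Fin a → ℂ) :=
  Matrix.mulVecLin (Matrix.of fun i j => w (i, j))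

/-- The image of a subset of `ℙ^{b-1}` under the linear projection `ℙ^{b-1} ⇢ ℙ^{a-1}`
given by a matrix. -/
def projImage {a b : ℕ} (w : Fin a × Fin b → ℂ) (Z : Set (PrV b)) : Set (PrV a) :=
  {z | ∃ x ∈ Z, ∃ c : ℂ, c ≠ 0 ∧ z.rep = c • matLin w x.rep}

/-- `X ⊆ ℙ^N` is the image of `X̃ ⊆ ℙ^{N+1}` under a bijective projection from a point
`Q ∉ X̃` (the centre `Q` being the projectivized kernel of the surjective linear map `L`). -/
def IsBijectiveProjectionOf {N : ℕ} (X : Set (Pr N)) (Xt : Set (Pr (N+1))) : Prop :=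
  ∃ L : (Fin (N+2) → ℂ) →ₗ[ℂ] (Fin (N+1) → ℂ), Function.Surjective L ∧
    (∀ x ∈ Xt, L x.rep ≠ 0) ∧
    X = {z | ∃ x ∈ Xt, ∃ c : ℂ, c ≠ 0 ∧ z.rep = c • L x.rep} ∧
    (∀ x ∈ Xt, ∀ y ∈ Xt, (∃ c : ℂ, L x.rep = c • L y.rep) → x = y)

/-- `X ⊆ ℙ^N` is linearly normal if it is not the image, under a bijective projection from
a point, of a nondegenerate subvariety of `ℙ^{N+1}`. -/
def LinearlyNormal {N : ℕ} (X : Set (Pr N)) : Prop :=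
  ¬ ∃ Xt : Set (Pr (N+1)), IsClosed Xt ∧ IsIrreducible Xt ∧ NondegenerateSet Xt ∧
      IsBijectiveProjectionOf X Xt

/-- Extension by zero `ℂ^a → ℂ^b` (for `a ≤ b`). -/
def padMap (a b : ℕ) : (Fin a → ℂ) →ₗ[ℂ] (Fin b → ℂ) where
  toFun v := fun j => if h : (j : ℕ) < a then v ⟨j, h⟩ else 0
  map_add' v w := by funext j; by_cases h : (j : ℕ) < a <;> simp [h]
  map_smul' c v := by funext j; by_cases h : (j : ℕ) < a <;> simp [h]

lemma padMap_ne_zero {a b : ℕ} (hab : a ≤ b) {v : Fin a → ℂ} (hv : v ≠ 0) :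
    padMap a b v ≠ 0 := by
  obtain ⟨i, hi⟩ := Function.ne_iff.mp hv
  intro h
  have h2 := congrFun h ⟨i, lt_of_lt_of_le i.isLt hab⟩
  simp only [padMap, LinearMap.coe_mk, AddHom.coe_mk, Pi.zero_apply] at h2
  rw [dif_pos i.isLt] at h2
  exact hi (by simpa using h2)

/-- A point of `ℙ^{a-1}` viewed in `ℙ^{b-1}` via the inclusion of the first `a`
coordinates. -/
def embPt {a b : ℕ} (hab : a ≤ b) (x : PrV a) : PrV b :=
  Projectivization.mk ℂ (padMap a b x.rep) (padMap_ne_zero hab x.rep_nonzero)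

/-- The join of two subsets of projective space: the union of all lines joining a point of
`A` to a point of `B`. -/
def joinSets {n : ℕ} (A B : Set (PrV n)) : Set (PrV n) :=
  ⋃ x ∈ A, ⋃ y ∈ B, lineThrough x y


/-- The cone in `ℙ^{N+1} = ℙ^{r'+b+1}` over `Z ⊆ ℙ^{r'}` (embedded via the first `r'+1`
coordinates) with vertex the linear `ℙ^b` spanned by the last `b+1` coordinates: the
union of all lines joining a point of `Z` to a point of the vertex. -/
def coneOver (rp b : ℕ) (Z : Set (Pr rp)) : Set (Pr (rp + b + 1)) :=
  joinSets
    (embPt (show rp + 1 ≤ rp + b + 2 by omega) '' Z)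
    (projSub (LinearMap.ker
      (LinearMap.funLeft ℂ ℂ (Fin.castLE (show rp + 1 ≤ rp + b + 2 by omega)))))


/-- The punctured affine cone. -/
def AC {n : ℕ} (Y : Set (PrV n)) : Set (Fin n → ℂ) :=
  {v | ∃ hv : v ≠ 0, Projectivization.mk ℂ v hv ∈ Y}

lemma AC_ne {n : ℕ} {Y : Set (PrV n)} {v : Fin n → ℂ} (h : v ∈ AC Y) : v ≠ 0 := h.1

lemma AC_smul {n : ℕ} {Y : Set (PrV n)} {v : Fin n → ℂ} (h : v ∈ AC Y) {c : ℂ} (hc : c ≠ 0) :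
    c • v ∈ AC Y := by
  obtain ⟨hv, h⟩ := h
  refine ⟨smul_ne_zero hc hv, ?_⟩
  convert h using 1
  rw [Projectivization.mk_eq_mk_iff']
  exact ⟨c, rfl⟩

lemma rep_mem_AC {n : ℕ} {Y : Set (PrV n)} {x : PrV n} : x.rep ∈ AC Y ↔ x ∈ Y := by
  constructor
  · rintro ⟨hv, h⟩
    rwa [Projectivization.mk_rep] at h
  · intro h
    exact ⟨x.rep_nonzero, by rwa [Projectivization.mk_rep]⟩

lemma exists_rep_smul {n : ℕ} {v : Fin n → ℂ} (hv : v ≠ 0) :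
    ∃ c : ℂ, c ≠ 0 ∧ (Projectivization.mk ℂ v hv).rep = c • v := by
  obtain ⟨a, ha⟩ := Projectivization.exists_smul_eq_mk_rep ℂ v hv
  exact ⟨a, a.ne_zero, ha.symm⟩

lemma AC_ext {n : ℕ} {Y Y' : Set (PrV n)} (h : ∀ v, v ∈ AC Y ↔ v ∈ AC Y') : Y = Y' := by
  ext x
  rw [← rep_mem_AC, ← rep_mem_AC, h]

lemma mem_AC_mk {n : ℕ} {Y : Set (PrV n)} {v : Fin n → ℂ} (hv : v ≠ 0) :
    v ∈ AC Y ↔ Projectivization.mk ℂ v hv ∈ Y := ⟨fun h => h.2, fun h => ⟨hv, h⟩⟩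

lemma mem_idealOf {n : ℕ} {Y : Set (PrV n)} {f : MvPolynomial (Fin n) ℂ} :
    f ∈ idealOf Y ↔ ∀ v ∈ AC Y, eval v f = 0 := by
  constructor
  · rintro h v ⟨hv, hY⟩
    exact h hY v hv rfl
  · intro h x hx v hv hvx
    exact h v ⟨hv, hvx ▸ hx⟩

lemma mem_pZero_mk {n : ℕ} {f : MvPolynomial (Fin n) ℂ} {v : Fin n → ℂ} (hv : v ≠ 0) :
    Projectivization.mk ℂ v hv ∈ pZero f ↔ ∀ c : ℂ, c ≠ 0 → eval (c • v) f = 0 := by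
  constructor
  · intro h c hc
    refine h _ (smul_ne_zero hc hv) ?_
    rw [Projectivization.mk_eq_mk_iff']
    exact ⟨c, rfl⟩
  · intro h w hw hwv
    rw [Projectivization.mk_eq_mk_iff'] at hwv
    obtain ⟨c, rfl⟩ := hwv
    exact h c (by rintro rfl; simp at hw)

/-- Restriction of `f` to the line spanned by `v`. -/
def lineP {n : ℕ} (v : Fin n → ℂ) (f : MvPolynomial (Fin n) ℂ) : Polynomial ℂ :=
  aeval (fun i => Polynomial.C (v i) * Polynomial.X) f

lemma lineP_eval {n : ℕ} (v : Fin n → ℂ) (f : MvPolynomial (Fin n) ℂ) (c : ℂ) :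
    (lineP v f).eval c = eval (c • v) f := by
  unfold lineP
  rw [← Polynomial.coe_evalRingHom, ← RingHom.coe_coe (aeval _), ← RingHom.comp_apply]
  have : ((Polynomial.evalRingHom c).comp
      (aeval (R := ℂ) (fun i => Polynomial.C (v i) * Polynomial.X) :
        MvPolynomial (Fin n) ℂ →ₐ[ℂ] Polynomial ℂ).toRingHom) = eval (c • v) := by
    apply MvPolynomial.ringHom_ext
    · intro r
      simp [Polynomial.algebraMap_eq]
    · intro i
      simp only [AlgHom.toRingHom_eq_coe, RingHom.coe_comp, RingHom.coe_coe, Function.comp_apply,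
        aeval_X, Polynomial.coe_evalRingHom, Polynomial.eval_mul, Polynomial.eval_C,
        Polynomial.eval_X, eval_X, Pi.smul_apply, smul_eq_mul]
      ring
  exact congrArg (fun φ => φ f) this

lemma lineP_eq_zero {p : Polynomial ℂ} (h : ∀ c : ℂ, c ≠ 0 → p.eval c = 0) : p = 0 := by
  refine Polynomial.eq_zero_of_infinite_isRoot p (Set.Infinite.mono (s := {0}ᶜ) ?_ ?_)
  · intro c hc
    exact h c hc
  · exact (Set.finite_singleton 0).infinite_compl

lemma lineP_homog {n : ℕ} (v : Fin n → ℂ) (f : MvPolynomial (Fin n) ℂ) (i : ℕ) :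
    (lineP v f).coeff i = eval v (homogeneousComponent i f) := by
  induction f using MvPolynomial.induction_on' with
  | monomial s a =>
    have h1 : lineP v (monomial s a) = Polynomial.C (eval v (monomial s a)) * Polynomial.X ^ s.degree := by
      unfold lineP
      rw [aeval_monomial, eval_monomial]
      simp only [Finsupp.prod, mul_pow, Finset.prod_mul_distrib, Finset.prod_pow_eq_pow_sum]
      simp [Finsupp.degree_apply, mul_assoc, Polynomial.algebraMap_eq]
    rw [h1, Polynomial.coeff_C_mul_X_pow]
    by_cases h : i = s.degree
    · subst h
      rw [if_pos rfl, homogeneousComponent_of_mem (isHomogeneous_monomial a rfl), if_pos rfl]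
    · rw [if_neg h, homogeneousComponent_of_mem (isHomogeneous_monomial a rfl), if_neg (by tauto)]
      simp
  | add p q hp hq =>
    have : lineP v (p + q) = lineP v p + lineP v q := by simp [lineP]
    rw [this]
    simp [hp, hq]

lemma mem_idealOf_component {n : ℕ} {Y : Set (PrV n)} {f : MvPolynomial (Fin n) ℂ}
    (h : f ∈ idealOf Y) (i : ℕ) : homogeneousComponent i f ∈ idealOf Y := by
  rw [mem_idealOf] at h ⊢
  intro v hv
  have : lineP v f = 0 := lineP_eq_zero fun c hc => by
    rw [lineP_eval]; exact h _ (AC_smul hv hc)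
  rw [← lineP_homog, this, Polynomial.coeff_zero]

lemma pZero_compl_inter {n : ℕ} (f g : MvPolynomial (Fin n) ℂ) :
    (pZero f)ᶜ ∩ (pZero g)ᶜ = (pZero (f * g))ᶜ := by
  rw [← Set.compl_union]
  congr 1
  ext x
  induction x using Projectivization.ind with | h v hv =>
  rw [Set.mem_union, mem_pZero_mk, mem_pZero_mk, mem_pZero_mk]
  constructor
  · rintro (h | h) c hc
    · simp [h c hc]
    · simp [h c hc]
  · intro h
    have : lineP v f * lineP v g = 0 := lineP_eq_zero fun c hc => by
      rw [Polynomial.eval_mul, lineP_eval, lineP_eval, ← map_mul]; exact h c hc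
    rcases mul_eq_zero.mp this with h | h
    · left; intro c hc; rw [← lineP_eval, h]; simp
    · right; intro c hc; rw [← lineP_eval, h]; simp

lemma pr_basis (n : ℕ) : TopologicalSpace.IsTopologicalBasis
    {U : Set (PrV n) | ∃ f : MvPolynomial (Fin n) ℂ, U = (pZero f)ᶜ} := by
  refine ⟨?_, ?_, rfl⟩
  · rintro _ ⟨f, rfl⟩ _ ⟨g, rfl⟩ x hx
    exact ⟨_, ⟨f * g, rfl⟩, by rwa [← pZero_compl_inter], by rw [← pZero_compl_inter]⟩
  · rw [Set.sUnion_eq_univ_iff]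
    intro x
    refine ⟨_, ⟨1, rfl⟩, ?_⟩
    intro h
    have := h x.rep x.rep_nonzero (Projectivization.mk_rep x)
    simp at this

lemma isClosed_pZero {n : ℕ} (f : MvPolynomial (Fin n) ℂ) : IsClosed (pZero f) := by
  rw [← isOpen_compl_iff]
  exact (pr_basis n).isOpen ⟨f, rfl⟩

/-- Projective zero locus of a set of polynomials. -/
def PV {n : ℕ} (I : Set (MvPolynomial (Fin n) ℂ)) : Set (PrV n) := {x | ∀ f ∈ I, x ∈ pZero f}

lemma isClosed_PV {n : ℕ} (I : Set (MvPolynomial (Fin n) ℂ)) : IsClosed (PV I) := by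
  have : PV I = ⋂ f ∈ I, pZero f := by ext; simp [PV]
  rw [this]
  exact isClosed_biInter fun f _ => isClosed_pZero f

lemma closed_iff_PV {n : ℕ} {Y : Set (PrV n)} : IsClosed Y ↔ PV (idealOf Y : Set _) = Y := by
  constructor
  · intro h
    apply Set.Subset.antisymm
    · intro x hx
      by_contra hxY
      obtain ⟨_, ⟨f, rfl⟩, hxf, hf⟩ := (pr_basis n).exists_subset_of_mem_open
        (show x ∈ Yᶜ from hxY) h.isOpen_compl
      exact hxf (hx f (Set.compl_subset_compl.mp hf))
    · intro x hx f hf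
      exact hf hx
  · intro h
    rw [← h]
    exact isClosed_PV _

lemma eval_bind1 {n m : ℕ} (g : Fin n → MvPolynomial (Fin m) ℂ) (f : MvPolynomial (Fin n) ℂ)
    (v : Fin m → ℂ) : eval v (bind₁ g f) = eval (fun i => eval v (g i)) f := by
  simpa [coe_aeval_eq_eval] using aeval_bind₁ (R := ℂ) v g f

lemma scale_mem {n : ℕ} {Y : Set (PrV n)} {f : MvPolynomial (Fin n) ℂ} (hf : f ∈ idealOf Y)
    {c : ℂ} (hc : c ≠ 0) : bind₁ (fun i => C c * X i) f ∈ idealOf Y := by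
  rw [mem_idealOf] at hf ⊢
  intro v hv
  have := hf _ (AC_smul hv hc)
  rw [eval_bind1, ← this]
  congr 2
  ext i
  simp

lemma mem_AC_PV {n : ℕ} {I : Set (MvPolynomial (Fin n) ℂ)}
    (hI : ∀ f ∈ I, ∀ i, homogeneousComponent i f ∈ I) {v : Fin n → ℂ} :
    v ∈ AC (PV I) ↔ v ≠ 0 ∧ ∀ f ∈ I, eval v f = 0 := by
  constructor
  · rintro ⟨hv, h⟩
    exact ⟨hv, fun f hf => h f hf v hv rfl⟩
  · rintro ⟨hv, h⟩
    refine ⟨hv, fun f hf => ?_⟩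
    rw [mem_pZero_mk]
    intro c hc
    have : lineP v f = 0 := by
      ext i
      rw [lineP_homog, h _ (hI f hf i)]
      simp
    rw [← lineP_eval, this, Polynomial.eval_zero]

lemma mem_AC_closed {n : ℕ} {Y : Set (PrV n)} (hY : IsClosed Y) {v : Fin n → ℂ} :
    v ∈ AC Y ↔ v ≠ 0 ∧ ∀ f ∈ idealOf Y, eval v f = 0 := by
  have := mem_AC_PV (I := (↑(idealOf Y) : Set (MvPolynomial (Fin n) ℂ))) (fun f hf i => mem_idealOf_component hf i) (v := v)
  rw [closed_iff_PV.mp hY] at this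
  simpa using this

lemma closed_of_AC {n : ℕ} {Y : Set (PrV n)}
    (h : ∀ v : Fin n → ℂ, v ≠ 0 → (∀ f ∈ idealOf Y, eval v f = 0) → v ∈ AC Y) : IsClosed Y := by
  rw [closed_iff_PV]
  apply AC_ext
  intro v
  refine (mem_AC_PV (I := (↑(idealOf Y) : Set (MvPolynomial (Fin n) ℂ))) (fun f hf i => mem_idealOf_component hf i)).trans ?_
  exact ⟨fun hv => h v hv.1 hv.2, fun hv => ⟨hv.1, fun f hf => mem_idealOf.mp hf v hv⟩⟩

lemma prime_of_irred {n : ℕ} {Y : Set (PrV n)} (hY : IsIrreducible Y) : (idealOf Y).IsPrime := by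
  constructor
  · intro h
    obtain ⟨x, hx⟩ := hY.1
    have h1 : (1 : MvPolynomial (Fin n) ℂ) ∈ idealOf Y := h ▸ Submodule.mem_top
    have := mem_idealOf.mp h1 _ (rep_mem_AC.mpr hx)
    simp at this
  · intro f g hfg
    by_contra! hcon
    have key : ∀ f : MvPolynomial (Fin n) ℂ, f ∉ idealOf Y → (Y ∩ (pZero f)ᶜ).Nonempty := by
      intro f hf
      by_contra h
      rw [Set.not_nonempty_iff_eq_empty] at h
      apply hf
      intro x hx
      by_contra hxf
      exact Set.notMem_empty x (h ▸ ⟨hx, hxf⟩)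
    obtain ⟨x, hxY, hx⟩ := hY.2 _ _ ((isClosed_pZero f).isOpen_compl)
      ((isClosed_pZero g).isOpen_compl) (key f hcon.1) (key g hcon.2)
    rw [pZero_compl_inter] at hx
    exact hx (hfg hxY)

lemma irred_of_prime {n : ℕ} {Y : Set (PrV n)} (hne : Y.Nonempty) (h : (idealOf Y).IsPrime) :
    IsIrreducible Y := by
  refine ⟨hne, ?_⟩
  rintro U V hU hV ⟨x, hxY, hxU⟩ ⟨y, hyY, hyV⟩
  obtain ⟨_, ⟨f, rfl⟩, hxf, hf⟩ := (pr_basis n).exists_subset_of_mem_open hxU hU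
  obtain ⟨_, ⟨g, rfl⟩, hyg, hg⟩ := (pr_basis n).exists_subset_of_mem_open hyV hV
  have hf' : f ∉ idealOf Y := fun h => hxf (h hxY)
  have hg' : g ∉ idealOf Y := fun h => hyg (h hyY)
  have hfg : f * g ∉ idealOf Y := fun hc => (h.mem_or_mem hc).elim hf' hg'
  by_contra hcon
  apply hfg
  intro z hz
  by_contra hzf
  have : z ∈ (pZero f)ᶜ ∩ (pZero g)ᶜ := by rw [pZero_compl_inter]; exact hzf
  exact hcon ⟨z, hz, hf this.1, hg this.2⟩



lemma height_poly_aux {R : Type*} [CommRing R] [IsNoetherianRing R] [IsJacobsonRing R]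
    (k : ℕ∞) (h : ∀ p : Ideal R, p.IsMaximal → p.height = k) (P : Ideal (Polynomial R))
    [P.IsMaximal] : P.height = k + 1 := by
  have h1 : (P.comap (Polynomial.C : R →+* Polynomial R)).IsMaximal :=
    Polynomial.isMaximal_comap_C_of_isJacobsonRing P
  have h2 : P.LiesOver (P.comap (Polynomial.C : R →+* Polynomial R)) := ⟨rfl⟩
  rw [Polynomial.height_eq_height_add_one (P.comap (Polynomial.C : R →+* Polynomial R)) P, h _ h1]

lemma height_max_mvPoly (s : ℕ) (n : Ideal (MvPolynomial (Fin s) ℂ)) [n.IsMaximal] :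
    n.height = s := by
  induction s with
  | zero =>
    have h := Ideal.height_le_ringKrullDim_of_ne_top (I := n) Ideal.IsPrime.ne_top'
    rw [MvPolynomial.ringKrullDim_of_isNoetherianRing] at h
    simp at h
    simpa using h
  | succ s ih =>
    have hP : (n.map (finSuccEquiv ℂ s).toRingEquiv).IsMaximal := Ideal.map_isMaximal_of_equiv _
    have h1 := RingEquiv.height_map (finSuccEquiv ℂ s).toRingEquiv n
    rw [← h1, height_poly_aux (s : ℕ∞) (fun p hp => ih p)]
    simp

lemma dim_of_integral {B : Type*} [CommRing B] [IsDomain B] [Algebra ℂ B] [IsNoetherianRing B] (s : ℕ)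
    (g : MvPolynomial (Fin s) ℂ →+* B) (hg : Function.Injective g) (hi : g.IsIntegral) :
    ringKrullDim B = s ∧ ∀ n : Ideal B, n.IsMaximal → n.height = s := by
  algebraize [g]
  have : FaithfulSMul (MvPolynomial (Fin s) ℂ) B := (faithfulSMul_iff_algebraMap_injective _ _).mpr hg
  have hle : ringKrullDim B ≤ s := by
    have h0 : ringKrullDim (MvPolynomial (Fin s) ℂ) = s := by
      rw [MvPolynomial.ringKrullDim_of_isNoetherianRing]; simp
    rw [← h0]
    refine Order.krullDim_le_of_strictMono (PrimeSpectrum.comap (algebraMap (MvPolynomial (Fin s) ℂ) B)) ?_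
    intro p q hpq
    exact Ideal.IsIntegral.comap_lt_comap (R := MvPolynomial (Fin s) ℂ) (I := p.asIdeal) (J := q.asIdeal) hpq
  have hge : ∀ n : Ideal B, n.IsMaximal → (s : ℕ∞) ≤ n.height := by
    intro n hn
    have : (n.under (MvPolynomial (Fin s) ℂ)).IsMaximal := Ideal.isMaximal_comap_of_isIntegral_of_isMaximal n
    rw [Ideal.height_eq_height_add_of_liesOver_of_hasGoingDown (n.under (MvPolynomial (Fin s) ℂ)) n,
      height_max_mvPoly]
    exact le_self_add
  have hle' : ∀ n : Ideal B, n.IsMaximal → n.height ≤ s := by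
    intro n hn
    have := (Ideal.height_le_ringKrullDim_of_ne_top (I := n) hn.ne_top).trans hle
    exact_mod_cast this
  have hh : ∀ n : Ideal B, n.IsMaximal → n.height = s := fun n hn => le_antisymm (hle' n hn) (hge n hn)
  refine ⟨le_antisymm hle ?_, hh⟩
  obtain ⟨n, hn⟩ := Ideal.exists_maximal B
  rw [← WithBot.coe_natCast, ← hh n hn]
  exact Ideal.height_le_ringKrullDim_of_ne_top hn.ne_top

lemma exists_dim {B : Type} [CommRing B] [IsDomain B] [Algebra ℂ B] [Algebra.FiniteType ℂ B] :
    ∃ s : ℕ, ∃ g : MvPolynomial (Fin s) ℂ →+* B, Function.Injective g ∧ g.IsIntegral ∧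
     ringKrullDim B = s ∧ ∀ n : Ideal B, n.IsMaximal → n.height = s := by
  obtain ⟨s, g, h1, h2⟩ := exists_integral_inj_algHom_of_fg ℂ B
  have : IsNoetherianRing B := Algebra.FiniteType.isNoetherianRing ℂ B
  exact ⟨s, g.toRingHom, h1, h2, dim_of_integral s g.toRingHom h1 h2⟩



/-- Homogeneous ideals. -/
def HomId {n : ℕ} (I : Ideal (MvPolynomial (Fin n) ℂ)) : Prop :=
  ∀ f ∈ I, ∀ i, homogeneousComponent i f ∈ I

lemma homId_idealOf {n : ℕ} (Y : Set (PrV n)) : HomId (idealOf Y) :=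
  fun _ hf i => mem_idealOf_component hf i

/-- Ideal of a point of affine space. -/
def ptI {n : ℕ} (v : Fin n → ℂ) : Ideal (MvPolynomial (Fin n) ℂ) :=
  RingHom.ker (eval v : MvPolynomial (Fin n) ℂ →+* ℂ)

lemma mem_ptI {n : ℕ} {v : Fin n → ℂ} {f : MvPolynomial (Fin n) ℂ} : f ∈ ptI v ↔ eval v f = 0 :=
  Iff.rfl

instance ptI_max {n : ℕ} (v : Fin n → ℂ) : (ptI v).IsMaximal :=
  RingHom.ker_isMaximal_of_surjective _ fun c => ⟨C c, by simp⟩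

lemma homId_le {n : ℕ} {I : Ideal (MvPolynomial (Fin n) ℂ)} (hI : HomId I) (h : I ≠ ⊤) :
    I ≤ ptI 0 := by
  intro f hf
  have h0 := hI f hf 0
  rw [homogeneousComponent_zero] at h0
  rw [mem_ptI]
  by_contra hc
  apply h
  have h1 : eval 0 f = coeff 0 f := by
    rw [← constantCoeff_eq, constantCoeff_eq, ← constantCoeff_eq]
    simp [constantCoeff_eq]
  rw [Ideal.eq_top_iff_one]
  have := I.mul_mem_left (C (coeff 0 f)⁻¹) h0
  rwa [← C_mul, inv_mul_cancel₀ (h1 ▸ hc), C_1] at this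

lemma exists_homCore {n : ℕ} {Q : Ideal (MvPolynomial (Fin n) ℂ)} (hQ : Q.IsPrime) :
    ∃ Q' : Ideal (MvPolynomial (Fin n) ℂ), Q'.IsPrime ∧ HomId Q' ∧ Q' ≤ Q ∧
      ∀ I : Ideal (MvPolynomial (Fin n) ℂ), HomId I → I ≤ Q → I ≤ Q' := by
  let _ : GradedAlgebra (homogeneousSubmodule (Fin n) ℂ) := gradedAlgebra
  refine ⟨(Q.homogeneousCore (homogeneousSubmodule (Fin n) ℂ)).toIdeal,
    Ideal.IsPrime.homogeneousCore hQ, ?_, Ideal.toIdeal_homogeneousCore_le _ _, ?_⟩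
  · intro f hf i
    have := (Q.homogeneousCore (homogeneousSubmodule (Fin n) ℂ)).isHomogeneous i hf
    rwa [← DirectSum.Decomposition.decompose'_eq, decomposition.decompose'_apply] at this
  · intro I hI hIQ f hf
    rw [← sum_homogeneousComponent f]
    refine Ideal.sum_mem _ fun i _ => ?_
    refine Ideal.mem_homogeneousCore_of_homogeneous_of_mem ?_ (hIQ (hI f hf i))
    exact ⟨i, homogeneousComponent_mem i f⟩

lemma idealOf_PV {n : ℕ} {P : Ideal (MvPolynomial (Fin n) ℂ)} (hP : P.IsPrime) (hh : HomId P)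
    (hlt : P < ptI 0) : idealOf (PV (P : Set (MvPolynomial (Fin n) ℂ))) = P := by
  apply le_antisymm
  · intro f hf
    have hex : ∃ i, (X i : MvPolynomial (Fin n) ℂ) ∉ P := by
      by_contra! hc
      apply hlt.not_ge
      intro g hg
      rw [g.as_sum]
      refine Ideal.sum_mem _ fun s hs => ?_
      by_cases hs0 : s = 0
      · subst hs0
        exfalso
        rw [mem_support_iff] at hs
        apply hs
        have : eval 0 g = coeff 0 g := by simp [constantCoeff_eq]
        rw [← this]; exact hg
      · obtain ⟨i, hi⟩ := Finsupp.ne_iff.mp hs0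
        have : monomial s (coeff s g) = monomial (s - Finsupp.single i 1) (coeff s g) * X i := by
          rw [X, monomial_mul, mul_one, tsub_add_cancel_of_le]
          rw [Finsupp.single_le_iff]
          exact Nat.one_le_iff_ne_zero.mpr hi
        rw [this]
        exact P.mul_mem_left _ (hc i)
    obtain ⟨i, hi⟩ := hex
    refine (hP.mem_or_mem (x := f) (y := X i) ?_).resolve_right hi
    rw [← MvPolynomial.IsPrime.vanishingIdeal_zeroLocus (K := ℂ) P, mem_vanishingIdeal_iff]
    intro v hv
    show eval v (f * X i) = 0
    rw [map_mul]
    by_cases hv0 : v = 0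
    · simp [hv0]
    · rw [mem_idealOf.mp hf v ((mem_AC_PV hh).mpr ⟨hv0, ?_⟩), zero_mul]
      intro g hg
      simpa [coe_aeval_eq_eval] using hv g hg
  · intro f hf
    rw [mem_idealOf]
    intro v hv
    exact ((mem_AC_PV hh).mp hv).2 f hf

lemma idealOf_anti {n : ℕ} {Y Y' : Set (PrV n)} (h : Y ⊆ Y') : idealOf Y' ≤ idealOf Y :=
  fun _ hf _ hx => hf (h hx)

lemma idealOf_ne_top {n : ℕ} {Y : Set (PrV n)} (h : Y.Nonempty) : idealOf Y ≠ ⊤ := by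
  obtain ⟨x, hx⟩ := h
  intro ht
  have := mem_idealOf.mp (show (1 : MvPolynomial (Fin n) ℂ) ∈ idealOf Y from ht ▸ Submodule.mem_top)
    _ (rep_mem_AC.mpr hx)
  simp at this

lemma idealOf_lt {n : ℕ} {Y : Set (PrV n)} (h : Y.Nonempty) : idealOf Y < ptI 0 := by
  refine lt_of_le_of_ne (homId_le (homId_idealOf Y) (idealOf_ne_top h)) ?_
  intro heq
  obtain ⟨x, hx⟩ := h
  apply x.rep_nonzero
  ext i
  have := mem_idealOf.mp (show (X i : MvPolynomial (Fin n) ℂ) ∈ idealOf Y by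
    rw [heq, mem_ptI]; simp) _ (rep_mem_AC.mpr hx)
  simpa using this

lemma PV_nonempty {n : ℕ} {P : Ideal (MvPolynomial (Fin n) ℂ)} (hP : P.IsPrime) (hh : HomId P)
    (hlt : P < ptI 0) : (PV (P : Set (MvPolynomial (Fin n) ℂ))).Nonempty := by
  by_contra h
  rw [Set.not_nonempty_iff_eq_empty] at h
  apply hP.ne_top
  rw [← idealOf_PV hP hh hlt, h, Ideal.eq_top_iff_one]
  intro x hx
  exact hx.elim

lemma PV_irred {n : ℕ} {P : Ideal (MvPolynomial (Fin n) ℂ)} (hP : P.IsPrime) (hh : HomId P)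
    (hlt : P < ptI 0) : IsIrreducible (PV (P : Set (MvPolynomial (Fin n) ℂ))) :=
  irred_of_prime (PV_nonempty hP hh hlt) (by rwa [idealOf_PV hP hh hlt])

/-- The irreducible closed set of a homogeneous prime. -/
def icOf {n : ℕ} (P : Ideal (MvPolynomial (Fin n) ℂ)) (hP : P.IsPrime) (hh : HomId P)
    (hlt : P < ptI 0) : TopologicalSpace.IrreducibleCloseds (PrV n) :=
  ⟨PV (P : Set (MvPolynomial (Fin n) ℂ)), PV_irred hP hh hlt, isClosed_PV _⟩

lemma wb_cancel {x y : WithBot ℕ∞} (h : x + 1 ≤ y + 1) : x ≤ y := by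
  refine (WithBot.add_le_add_iff_right' (c := (1 : WithBot ℕ∞)) ?_ ?_).mp h
  · exact WithBot.coe_ne_bot (a := (1 : ℕ∞))
  · exact WithBot.coe_injective.ne (a₁ := (1 : ℕ∞)) (a₂ := ⊤) ENat.one_ne_top

lemma krullDim_quot_quot_le {R : Type*} [CommRing R] (P : Ideal R) (g : R) :
    ringKrullDim ((R ⧸ P) ⧸ Ideal.span {Ideal.Quotient.mk P g}) ≤
      ringKrullDim (R ⧸ (P ⊔ Ideal.span {g})) := by
  have h2 := ringKrullDim_eq_of_ringEquiv (DoubleQuot.quotQuotEquivQuotSup P (Ideal.span {g}))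
  rw [Ideal.map_span, Set.image_singleton] at h2
  exact h2.le

lemma dim_lower {n : ℕ} (d : ℕ) : ∀ (P : Ideal (MvPolynomial (Fin n) ℂ)) (hP : P.IsPrime)
    (hh : HomId P) (hlt : P < ptI 0),
    ((d + 1 : ℕ) : WithBot ℕ∞) ≤ ringKrullDim (MvPolynomial (Fin n) ℂ ⧸ P) →
    (d : ℕ∞) ≤ Order.height (icOf P hP hh hlt) := by
  induction d with
  | zero => intros; simp
  | succ d ih =>
    intro P hP hh hlt hd
    obtain ⟨f, hfM, hfP⟩ := SetLike.exists_of_lt hlt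
    have hex : ∃ g, HomId (Ideal.span {g}) ∧ g ∈ ptI 0 ∧ g ∉ P := by
      by_contra! hc
      apply hfP
      rw [← sum_homogeneousComponent f]
      refine Ideal.sum_mem _ fun i _ => ?_
      apply hc
      · intro g hg j
        rw [Ideal.mem_span_singleton] at hg ⊢
        obtain ⟨q, rfl⟩ := hg
        rw [← sum_homogeneousComponent q, Finset.mul_sum, map_sum]
        refine Finset.dvd_sum fun k _ => ?_
        have : IsHomogeneous (homogeneousComponent i f * homogeneousComponent k q) (i + k) :=
          (homogeneousComponent_isHomogeneous i f).mul (homogeneousComponent_isHomogeneous k q)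
        rw [homogeneousComponent_of_mem this]
        split_ifs
        · exact Dvd.intro _ rfl
        · exact dvd_zero _
      · have hM : HomId (ptI (0 : Fin n → ℂ)) := by
          intro g hg i
          rw [mem_ptI] at hg ⊢
          rw [← lineP_homog]
          have : lineP 0 g = 0 := lineP_eq_zero fun c hc => by
            rw [lineP_eval]; simpa using hg
          rw [this]; simp
        exact hM f hfM i
    obtain ⟨g, hgh, hgM, hgP⟩ := hex
    have hdim : ((d + 1 : ℕ) : WithBot ℕ∞) ≤
        ringKrullDim (MvPolynomial (Fin n) ℂ ⧸ (P ⊔ Ideal.span {g})) := by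
      obtain ⟨s, -, -, -, hs1, hs2⟩ := exists_dim (B := MvPolynomial (Fin n) ℂ ⧸ P)
      rw [hs1] at hd
      have hmax : ((ptI 0).map (Ideal.Quotient.mk P)).IsMaximal := by
        refine Ideal.IsMaximal.map_of_surjective_of_ker_le Ideal.Quotient.mk_surjective ?_
        rw [Ideal.mk_ker]; exact hlt.le
      have h1 := Ideal.height_le_ringKrullDim_quotient_add_one
        (Ideal.mem_map_of_mem (Ideal.Quotient.mk P) hgM)
      rw [hs2 _ hmax] at h1
      have h2 := krullDim_quot_quot_le P g
      replace h1 := h1.trans (add_le_add_left h2 1)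
      have h3 := hd.trans h1
      rw [Nat.cast_add (d+1) 1] at h3
      exact wb_cancel h3
    rw [ringKrullDim_quotient, Order.le_krullDim_iff] at hdim
    obtain ⟨l, hl⟩ := hdim
    obtain ⟨Q, hQp, hQh, hQle, hQ⟩ := exists_homCore l.head.1.isPrime
    have hPg : P ⊔ Ideal.span {g} ≤ l.head.1.asIdeal := l.head.2
    have hPQ := hQ P hh (le_sup_left.trans hPg)
    have hgQ := hQ _ hgh (le_sup_right.trans hPg)
    have hPQ' : P < Q := lt_of_le_of_ne hPQ fun h => hgP (h ▸ hgQ (Ideal.mem_span_singleton_self g))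
    have hdQ : ((d + 1 : ℕ) : WithBot ℕ∞) ≤ ringKrullDim (MvPolynomial (Fin n) ℂ ⧸ Q) := by
      rw [ringKrullDim_quotient, Order.le_krullDim_iff]
      refine ⟨⟨l.length, fun i => ⟨(l i).1, ?_⟩, fun i => l.step i⟩, hl⟩
      exact hQle.trans (show l.head.1 ≤ (l i).1 from LTSeries.head_le l i)
    have hQlt : Q < ptI 0 := by
      refine lt_of_le_of_ne (homId_le hQh hQp.ne_top) ?_
      rintro rfl
      have : IsField (MvPolynomial (Fin n) ℂ ⧸ ptI (0 : Fin n → ℂ)) :=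
        (Ideal.Quotient.maximal_ideal_iff_isField_quotient _).mp (ptI_max 0)
      rw [ringKrullDim_eq_zero_of_isField this] at hdQ
      have h5 : d + 1 ≤ 0 := by exact_mod_cast hdQ
      omega
    have h6 := ih Q hQp hQh hQlt hdQ
    have h7 : icOf Q hQp hQh hQlt < icOf P hP hh hlt := by
      refine lt_of_le_of_ne ?_ ?_
      · intro x hx f hf
        exact hx f (hPQ hf)
      · intro heq
        have : PV (Q : Set (MvPolynomial (Fin n) ℂ)) = PV (P : Set (MvPolynomial (Fin n) ℂ)) :=
          congrArg (fun C : TopologicalSpace.IrreducibleCloseds (PrV n) => (C : Set (PrV n))) heq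
        have h8 := idealOf_PV hQp hQh hQlt
        rw [this, idealOf_PV hP hh hlt] at h8
        exact hPQ'.ne h8
    have h8 := Order.height_add_one_le h7
    push_cast
    exact (add_le_add_left h6 1).trans h8


/-- Irreducible closed subsets of `Y` as irreducible closed subsets of projective space. -/
def icMap {n : ℕ} (Y : Set (PrV n)) (hY : IsClosed Y)
    (D : TopologicalSpace.IrreducibleCloseds Y) : TopologicalSpace.IrreducibleCloseds (PrV n) :=
  ⟨Subtype.val '' (D : Set Y), D.isIrreducible.image _ continuous_subtype_val.continuousOn,
    hY.isClosedEmbedding_subtypeVal.isClosedMap _ D.isClosed⟩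

lemma icMap_strictMono {n : ℕ} (Y : Set (PrV n)) (hY : IsClosed Y) : StrictMono (icMap Y hY) := by
  refine Monotone.strictMono_of_injective ?_ ?_
  · intro a b hab
    exact Set.image_mono hab
  · intro a b hab
    apply TopologicalSpace.IrreducibleCloseds.ext
    have : Subtype.val '' (a : Set Y) = Subtype.val '' (b : Set Y) :=
      congrArg (fun C : TopologicalSpace.IrreducibleCloseds (PrV n) => (C : Set (PrV n))) hab
    exact Subtype.val_injective.image_injective this

/-- The prime ideal of an irreducible closed subset (bottom goes to the irrelevant ideal). -/
def icPrime {n : ℕ} (Y : Set (PrV n)) (hY : IsClosed Y) (h : Y.Nonempty) :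
    WithBot (TopologicalSpace.IrreducibleCloseds Y) →
      (PrimeSpectrum.zeroLocus (R := MvPolynomial (Fin n) ℂ) (idealOf Y))ᵒᵈ
  | none => OrderDual.toDual ⟨⟨ptI 0, (ptI_max 0).isPrime⟩, (idealOf_lt h).le⟩
  | some D => OrderDual.toDual ⟨⟨idealOf (icMap Y hY D : Set (PrV n)),
      prime_of_irred (icMap Y hY D).isIrreducible⟩, by
        apply idealOf_anti
        rintro _ ⟨y, -, rfl⟩
        exact y.2⟩

lemma icPrime_strictMono {n : ℕ} (Y : Set (PrV n)) (hY : IsClosed Y) (h : Y.Nonempty) :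
    StrictMono (icPrime Y hY h) := by
  intro a b hab
  induction b using WithBot.recBotCoe with
  | bot => simp at hab
  | coe b =>
    induction a using WithBot.recBotCoe with
    | bot =>
      show idealOf (icMap Y hY b : Set (PrV n)) < ptI 0
      exact idealOf_lt (icMap Y hY b).isIrreducible.nonempty
    | coe a =>
      show idealOf (icMap Y hY b : Set (PrV n)) < idealOf (icMap Y hY a : Set (PrV n))
      have h1 := icMap_strictMono Y hY (WithBot.coe_lt_coe.mp hab)
      refine lt_of_le_of_ne (idealOf_anti h1.le) ?_
      intro heq
      apply h1.ne
      apply TopologicalSpace.IrreducibleCloseds.ext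
      have e1 := closed_iff_PV.mp (icMap Y hY b).isClosed
      have e2 := closed_iff_PV.mp (icMap Y hY a).isClosed
      rw [heq, e2] at e1
      exact e1

lemma irr_sub {T : Type*} [TopologicalSpace T] {Y D : Set T} (hD : D ⊆ Y) (h : IsIrreducible D) :
    IsIrreducible (Subtype.val ⁻¹' D : Set Y) := by
  obtain ⟨⟨x, hx⟩, h⟩ := h
  refine ⟨⟨⟨x, hD hx⟩, hx⟩, ?_⟩
  rintro _ _ ⟨U, hU, rfl⟩ ⟨V, hV, rfl⟩ ⟨u, hu1, hu2⟩ ⟨v, hv1, hv2⟩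
  obtain ⟨w, hw1, hw2⟩ := h U V hU hV ⟨u, hu1, hu2⟩ ⟨v, hv1, hv2⟩
  exact ⟨⟨w, hD hw1⟩, hw1, hw2⟩

lemma icOf_height {n : ℕ} {Y : Set (PrV n)} (hY : IsClosed Y) (hir : IsIrreducible Y) :
    (Order.height (⟨Y, hir, hY⟩ : TopologicalSpace.IrreducibleCloseds (PrV n)) : WithBot ℕ∞)
      ≤ pdim Y := by
  rw [Order.height_eq_krullDim_Iic]
  refine Order.krullDim_le_of_strictMono (fun D => (⟨Subtype.val ⁻¹' (D.1 : Set (PrV n)), ?_,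
    D.1.isClosed.preimage continuous_subtype_val⟩ : TopologicalSpace.IrreducibleCloseds Y)) ?_
  · have h1 : IsIrreducible (D.1 : Set (PrV n)) := D.1.isIrreducible
    have hD : (D.1 : Set (PrV n)) ⊆ Y := D.2
    exact irr_sub hD h1
  · refine Monotone.strictMono_of_injective ?_ ?_
    · intro a b hab
      intro x hx
      exact hab hx
    · intro a b hab
      have h3 : (Subtype.val ⁻¹' (a.1 : Set (PrV n)) : Set Y) = Subtype.val ⁻¹' (b.1 : Set (PrV n)) :=
        congrArg (fun C : TopologicalSpace.IrreducibleCloseds Y => (C : Set Y)) hab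
      have ha : (a.1 : Set (PrV n)) ⊆ Y := a.2
      have hb : (b.1 : Set (PrV n)) ⊆ Y := b.2
      apply Subtype.ext
      apply TopologicalSpace.IrreducibleCloseds.ext
      have h4 := congrArg (fun s : Set Y => Subtype.val '' s) h3
      simpa only [Subtype.image_preimage_coe, Set.inter_eq_right.mpr ha,
        Set.inter_eq_right.mpr hb] using h4

theorem pdim_add_one {n : ℕ} {Y : Set (PrV n)} (hY : IsClosed Y) (hir : IsIrreducible Y) :
    pdim Y + 1 = ringKrullDim (MvPolynomial (Fin n) ℂ ⧸ idealOf Y) := by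
  have hp := prime_of_irred hir
  have hlt := idealOf_lt hir.nonempty
  have hne : Nonempty (TopologicalSpace.IrreducibleCloseds Y) := by
    refine ⟨⟨Set.univ, ?_, isClosed_univ⟩⟩
    simpa using irr_sub (le_refl Y) hir
  apply le_antisymm
  · have := Order.krullDim_le_of_strictMono _ (icPrime_strictMono Y hY hir.nonempty)
    rw [Order.krullDim_withBot, Order.krullDim_orderDual] at this
    rw [ringKrullDim_quotient]
    exact this
  · obtain ⟨s, -, -, -, hs, -⟩ := exists_dim (B := MvPolynomial (Fin n) ℂ ⧸ idealOf Y)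
    rw [hs]
    obtain _ | d := s
    · exact (zero_le_one).trans (le_add_of_nonneg_left (Order.krullDim_nonneg (α := TopologicalSpace.IrreducibleCloseds Y)))
    · have h1 := dim_lower d (idealOf Y) hp (homId_idealOf Y) hlt hs.ge
      have h2 : icOf (idealOf Y) hp (homId_idealOf Y) hlt = ⟨Y, hir, hY⟩ :=
        TopologicalSpace.IrreducibleCloseds.ext (closed_iff_PV.mp hY)
      rw [h2] at h1
      have h3 := (WithBot.coe_le_coe.mpr h1).trans (icOf_height hY hir)
      have h4 := add_le_add_left h3 1
      refine le_trans (le_of_eq ?_) h4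
      push_cast
      rfl



lemma jacLin_apply {n : ℕ} (f : MvPolynomial (Fin n) ℂ) (v ξ : Fin n → ℂ) :
    jacLin f v ξ = ∑ i, eval v (pderiv i f) * ξ i := by
  simp [jacLin]

lemma jacLin_add {n : ℕ} (f g : MvPolynomial (Fin n) ℂ) (v : Fin n → ℂ) :
    jacLin (f + g) v = jacLin f v + jacLin g v := by
  ext; simp [jacLin_apply, add_mul, Finset.sum_add_distrib]

lemma jacLin_mul {n : ℕ} (f g : MvPolynomial (Fin n) ℂ) (v : Fin n → ℂ) :
    jacLin (f * g) v = eval v f • jacLin g v + eval v g • jacLin f v := by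
  refine LinearMap.ext fun ξ => ?_
  rw [LinearMap.add_apply, LinearMap.smul_apply, LinearMap.smul_apply]
  simp only [jacLin_apply, smul_eq_mul, Finset.mul_sum, ← Finset.sum_add_distrib]
  refine Finset.sum_congr rfl fun i _ => ?_
  simp [Derivation.leibniz]
  ring

lemma jacLin_C {n : ℕ} (c : ℂ) (v : Fin n → ℂ) : jacLin (C c) v = 0 := by
  ext; simp [jacLin_apply]

lemma jacLin_X {n : ℕ} (i : Fin n) (v ξ : Fin n → ℂ) : jacLin (X i) v ξ = ξ i := by
  simp [jacLin_apply, pderiv_X, Pi.single_apply]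

/-- `jacLin` as a linear map. -/
def jacL {n : ℕ} (v : Fin n → ℂ) : MvPolynomial (Fin n) ℂ →ₗ[ℂ] Module.Dual ℂ (Fin n → ℂ) where
  toFun f := jacLin f v
  map_add' f g := jacLin_add f g v
  map_smul' c f := by
    rw [smul_eq_C_mul, jacLin_mul, jacLin_C]; simp

lemma jacLin_sub {n : ℕ} (f g : MvPolynomial (Fin n) ℂ) (v : Fin n → ℂ) :
    jacLin (f - g) v = jacLin f v - jacLin g v := map_sub (jacL v) f g

lemma jacLin_chain {n m : ℕ} (g : Fin n → MvPolynomial (Fin m) ℂ) (f : MvPolynomial (Fin n) ℂ)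
    (v ξ : Fin m → ℂ) : jacLin (bind₁ g f) v ξ =
      jacLin f (fun i => eval v (g i)) (fun i => jacLin (g i) v ξ) := by
  induction f using MvPolynomial.induction_on with
  | C c => rw [bind₁_C_right, jacLin_C, jacLin_C]; simp
  | add p q hp hq => rw [map_add, jacLin_add, jacLin_add, LinearMap.add_apply, LinearMap.add_apply, hp, hq]
  | mul_X p i hp =>
    rw [map_mul, bind₁_X_right, jacLin_mul, jacLin_mul, LinearMap.add_apply, LinearMap.add_apply]
    simp only [LinearMap.smul_apply, hp, jacLin_X, eval_X, eval_bind1]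

lemma mem_affTangent {n : ℕ} {Y : Set (PrV n)} {v ξ : Fin n → ℂ} :
    ξ ∈ affTangent Y v ↔ ∀ f ∈ idealOf Y, jacLin f v ξ = 0 := by
  simp only [affTangent, Submodule.mem_iInf, LinearMap.mem_ker]
  rfl

lemma jacLin_smul_pt {n : ℕ} (f : MvPolynomial (Fin n) ℂ) (c : ℂ) (v ξ : Fin n → ℂ) :
    jacLin (bind₁ (fun i => C c * X i) f) v ξ = c * jacLin f (c • v) ξ := by
  rw [jacLin_chain]
  have h1 : (fun i => eval v (C c * X i : MvPolynomial (Fin n) ℂ)) = c • v := by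
    ext i; simp
  have h2 : (fun i => jacLin (C c * X i : MvPolynomial (Fin n) ℂ) v ξ) = c • ξ := by
    ext i
    rw [jacLin_mul, jacLin_C]
    simp [jacLin_X]
  rw [h1, h2, map_smul, smul_eq_mul]

lemma affTangent_smul {n : ℕ} (Y : Set (PrV n)) (v : Fin n → ℂ) {c : ℂ} (hc : c ≠ 0) :
    affTangent Y (c • v) = affTangent Y v := by
  have key : ∀ (c : ℂ) (v : Fin n → ℂ), c ≠ 0 → affTangent Y v ≤ affTangent Y (c • v) := by
    intro c v hc ξ hξ
    rw [mem_affTangent] at hξ ⊢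
    intro f hf
    have := hξ _ (scale_mem hf hc)
    rw [jacLin_smul_pt] at this
    exact (mul_eq_zero.mp this).resolve_left hc
  refine le_antisymm ?_ (key c v hc)
  have := key c⁻¹ (c • v) (inv_ne_zero hc)
  rwa [smul_smul, inv_mul_cancel₀ hc, one_smul] at this

lemma jacLin_line {n : ℕ} (f : MvPolynomial (Fin n) ℂ) (v ξ : Fin n → ℂ)
    (h : ∀ t : ℂ, t ≠ 0 → eval (v + t • ξ) f = 0) : jacLin f v ξ = 0 := by
  let φ : MvPolynomial (Fin n) ℂ →ₐ[ℂ] Polynomial ℂ :=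
    aeval fun i => Polynomial.C (v i) + Polynomial.C (ξ i) * Polynomial.X
  have h1 : ∀ f t, (φ f).eval t = eval (v + t • ξ) f := by
    intro f t
    induction f using MvPolynomial.induction_on with
    | C c => simp [φ, Polynomial.algebraMap_eq]
    | add p q hp hq => simp [hp, hq]
    | mul_X p i hp => simp [hp]; left; simp [φ]; ring
  have h2 : ∀ f, (Polynomial.derivative (φ f)).eval 0 = jacLin f v ξ := by
    intro f
    induction f using MvPolynomial.induction_on with
    | C c => simp [φ, jacLin_C, Polynomial.algebraMap_eq]
    | add p q hp hq => simp [hp, hq, jacLin_add]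
    | mul_X p i hp =>
      have h3 : φ (X i) = Polynomial.C (v i) + Polynomial.C (ξ i) * Polynomial.X := by simp [φ]
      rw [map_mul, Polynomial.derivative_mul, Polynomial.eval_add, Polynomial.eval_mul,
        Polynomial.eval_mul, hp, h1, jacLin_mul, LinearMap.add_apply, LinearMap.smul_apply,
        LinearMap.smul_apply, jacLin_X, h3]
      simp [h1]
      ring
  rw [← h2, lineP_eq_zero (p := φ f) fun c hc => by rw [h1]; exact h c hc]
  simp

/-- The affine-linear polynomial with differential `μ` vanishing at `z`. -/
def linP {n : ℕ} (z : Fin n → ℂ) : Module.Dual ℂ (Fin n → ℂ) →ₗ[ℂ] MvPolynomial (Fin n) ℂ :=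
  ∑ i, (LinearMap.toSpanSingleton ℂ (MvPolynomial (Fin n) ℂ) (X i - C (z i))).comp
    (LinearMap.applyₗ (Pi.single i (1 : ℂ) : Fin n → ℂ))

lemma linP_apply {n : ℕ} (z : Fin n → ℂ) (μ : Module.Dual ℂ (Fin n → ℂ)) :
    linP z μ = ∑ i, C (μ (Pi.single i 1)) * (X i - C (z i)) := by
  simp [linP, LinearMap.sum_apply, smul_eq_C_mul]

lemma linP_eval {n : ℕ} (z : Fin n → ℂ) (μ : Module.Dual ℂ (Fin n → ℂ)) (v : Fin n → ℂ) :
    eval v (linP z μ) = μ (v - z) := by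
  rw [linP_apply, LinearMap.pi_apply_eq_sum_univ μ (v - z)]
  simp only [map_sum, map_mul, eval_C, map_sub, eval_X, smul_eq_mul, Pi.sub_apply]
  refine Finset.sum_congr rfl fun i _ => ?_
  rw [mul_comm]
  congr 3
  ext j
  simp [Pi.single_apply, eq_comm]

lemma linP_mem {n : ℕ} (z : Fin n → ℂ) (μ : Module.Dual ℂ (Fin n → ℂ)) : linP z μ ∈ ptI z := by
  rw [mem_ptI, linP_eval, sub_self, map_zero]

lemma jacLin_linP {n : ℕ} (z : Fin n → ℂ) (μ : Module.Dual ℂ (Fin n → ℂ)) (v : Fin n → ℂ) :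
    jacLin (linP z μ) v = μ := by
  have h : ∀ i : Fin n, jacLin (X i - C (z i)) v = LinearMap.proj i := by
    intro i
    rw [jacLin_sub, jacLin_C, sub_zero]
    ext; simp [jacLin_X]
  rw [linP_apply]
  show jacL v _ = _
  rw [map_sum]
  simp only [← smul_eq_C_mul, map_smul]
  refine LinearMap.pi_ext' fun i => LinearMap.ext_ring ?_
  simp only [jacL, LinearMap.coe_mk, AddHom.coe_mk, h]
  simp [Pi.single_apply]

lemma linP_proj {n : ℕ} (z : Fin n → ℂ) (i : Fin n) :
    linP z (LinearMap.proj i) = X i - C (z i) := by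
  rw [linP_apply, Finset.sum_eq_single i]
  · simp
  · intro j _ hj
    simp [hj.symm]
  · simp

lemma taylor {n : ℕ} (z : Fin n → ℂ) (f : MvPolynomial (Fin n) ℂ) :
    f - C (eval z f) - linP z (jacLin f z) ∈ ptI z ^ 2 := by
  induction f using MvPolynomial.induction_on with
  | C c => rw [jacLin_C]; simp
  | add p q hp hq =>
    have := Ideal.add_mem _ hp hq
    rw [jacLin_add, map_add, map_add, map_add]
    convert this using 1
    ring
  | mul_X p i hp =>
    rw [jacLin_mul, map_add, map_smul, map_smul]
    have h1 : jacLin (X i) z = LinearMap.proj i := by ext; simp [jacLin_X]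
    rw [h1, linP_proj, smul_eq_C_mul, smul_eq_C_mul, map_mul, eval_X, C_mul]
    have h2 : linP z (jacLin p z) * (X i - C (z i)) ∈ ptI z ^ 2 := by
      rw [pow_two]
      exact Ideal.mul_mem_mul (linP_mem _ _) (by rw [← linP_proj]; exact linP_mem _ _)
    have := Ideal.add_mem _ (Ideal.mul_mem_right (X i) _ hp) h2
    convert this using 1
    ring

lemma ptI_le_of {n : ℕ} {z : Fin n → ℂ} {I : Ideal (MvPolynomial (Fin n) ℂ)}
    (h : ∀ i, X i - C (z i) ∈ I) : ptI z ≤ I := by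
  intro f hf
  have key : ∀ f : MvPolynomial (Fin n) ℂ, f - C (eval z f) ∈ I := by
    intro f
    induction f using MvPolynomial.induction_on with
    | C c => simp
    | add p q hp hq =>
      have := I.add_mem hp hq
      rw [map_add, C_add]
      convert this using 1
      ring
    | mul_X p i hp =>
      have := I.add_mem (I.mul_mem_right (X i) hp) (I.mul_mem_left (C (eval z p)) (h i))
      rw [map_mul, eval_X, C_mul]
      convert this using 1
      ring
  have := key f
  rw [mem_ptI] at hf
  rwa [hf, C_0, sub_zero] at this



lemma exists_compl_fam {M : Type*} [AddCommGroup M] [Module ℂ M] [FiniteDimensional ℂ M]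
    (D N : Submodule ℂ M) (h : D ≤ N) (k : ℕ)
    (hk : Module.finrank ℂ N = Module.finrank ℂ D + k) :
    ∃ lam : Fin k → M, D ⊔ Submodule.span ℂ (Set.range lam) = N := by
  obtain ⟨K, hK⟩ := Submodule.exists_isCompl (D.comap N.subtype)
  have h1 := Submodule.finrank_add_eq_of_isCompl hK
  have h2 : Module.finrank ℂ (D.comap N.subtype) = Module.finrank ℂ D :=
    (Submodule.comapSubtypeEquivOfLe h).finrank_eq
  have h3 : Module.finrank ℂ K = k := by omega
  let B := Module.finBasisOfFinrankEq ℂ K h3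
  refine ⟨fun i => (B i : N), ?_⟩
  have h4 : Submodule.span ℂ (Set.range fun i => ((B i : N) : M)) = (K.map N.subtype) := by
    have : (Set.range fun i => ((B i : N) : M)) = (N.subtype ∘ₗ K.subtype) '' Set.range B := by
      rw [← Set.range_comp]; rfl
    rw [this, Submodule.span_image, B.span_eq, Submodule.map_comp]
    simp
  rw [h4]
  have h5 : D = (D.comap N.subtype).map N.subtype := by
    rw [Submodule.map_comap_subtype]; simpa using h
  rw [h5, ← Submodule.map_sup, hK.sup_eq_top]; simp

lemma jac_fam {n : ℕ} {Y : Set (PrV n)} {z q : Fin n → ℂ} {k : ℕ}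
    (hfr : Module.finrank ℂ (affTangent Y z) = k + 1) (hq : q ∈ affTangent Y z) (hq0 : q ≠ 0) :
    ∃ lam : Fin k → Module.Dual ℂ (Fin n → ℂ), (∀ j, lam j q = 0) ∧
      ∀ μ : Module.Dual ℂ (Fin n → ℂ), μ q = 0 →
        ∃ f ∈ idealOf Y, ∃ c : Fin k → ℂ, μ = jacLin f z + ∑ j, c j • lam j := by
  let D : Submodule ℂ (Module.Dual ℂ (Fin n → ℂ)) :=
    ((idealOf Y).restrictScalars ℂ).map (jacL z)
  let N : Submodule ℂ (Module.Dual ℂ (Fin n → ℂ)) := (Submodule.span ℂ {q}).dualAnnihilator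
  have hN : ∀ μ, μ ∈ N ↔ μ q = 0 := by
    intro μ
    rw [Submodule.mem_dualAnnihilator]
    constructor
    · intro h; exact h q (Submodule.mem_span_singleton_self q)
    · intro h w hw
      obtain ⟨c, rfl⟩ := Submodule.mem_span_singleton.1 hw
      simp [h]
  have hDN : D ≤ N := by
    rintro _ ⟨f, hf, rfl⟩
    exact (hN _).2 (mem_affTangent.1 hq f hf)
  have hT : D.dualCoannihilator = affTangent Y z := by
    ext ξ
    rw [Submodule.mem_dualCoannihilator, mem_affTangent]
    constructor
    · intro h f hf; exact h _ ⟨f, hf, rfl⟩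
    · rintro h _ ⟨f, hf, rfl⟩; exact h f hf
  have e1 := Subspace.finrank_add_finrank_dualCoannihilator_eq D
  have e2 := Subspace.finrank_add_finrank_dualAnnihilator_eq (Submodule.span ℂ {q})
  rw [hT, hfr] at e1
  rw [finrank_span_singleton hq0] at e2
  have e3 : Module.finrank ℂ N = Module.finrank ℂ D + k := by
    change 1 + Module.finrank ℂ N = _ at e2
    omega
  obtain ⟨lam, hlam⟩ := exists_compl_fam D N hDN k e3
  refine ⟨lam, fun j => (hN _).1 ?_, fun μ hμ => ?_⟩
  · rw [← hlam]
    exact Submodule.mem_sup_right (Submodule.subset_span ⟨j, rfl⟩)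
  · have := (hN _).2 hμ
    rw [← hlam] at this
    obtain ⟨_, ⟨f, hf, rfl⟩, y, hy, rfl⟩ := Submodule.mem_sup.1 this
    obtain ⟨c, rfl⟩ := (Submodule.mem_span_range_iff_exists_fun ℂ).1 hy
    exact ⟨f, hf, c, rfl⟩

lemma height_map_le {R : Type*} [CommRing R] [IsNoetherianRing R] (I n : Ideal R)
    (hn : n.IsMaximal) {k : ℕ} (s : Fin k → R) (hI : I ≤ n) (hs : ∀ j, s j ∈ n)
    (hmin : ∀ P : Ideal R, P.IsPrime → I ≤ P → (∀ j, s j ∈ P) → P ≤ n → P = n) :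
    (n.map (Ideal.Quotient.mk I)).IsMaximal ∧ (n.map (Ideal.Quotient.mk I)).height ≤ k := by
  have hsurj := Ideal.Quotient.mk_surjective (I := I)
  have hker : RingHom.ker (Ideal.Quotient.mk I) ≤ n := by rwa [Ideal.mk_ker]
  have hmax : (n.map (Ideal.Quotient.mk I)).IsMaximal :=
    Ideal.IsMaximal.map_of_surjective_of_ker_le hsurj hker
  refine ⟨hmax, ?_⟩
  have hfin : (Set.range fun j => Ideal.Quotient.mk I (s j)).Finite := Set.finite_range _
  have hc : (Ideal.map (Ideal.Quotient.mk I) n).comap (Ideal.Quotient.mk I) = n := by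
    rw [Ideal.comap_map_of_surjective' _ hsurj, Ideal.mk_ker, sup_eq_left.2 hI]
  have hm : n.map (Ideal.Quotient.mk I) ∈
      (Ideal.span (Set.range fun j => Ideal.Quotient.mk I (s j))).minimalPrimes := by
    refine ⟨⟨hmax.isPrime, ?_⟩, ?_⟩
    · rw [Ideal.span_le]
      rintro _ ⟨j, rfl⟩
      exact Ideal.mem_map_of_mem _ (hs j)
    · rintro P ⟨hP, hsP⟩ hPn
      have hPc : (P.comap (Ideal.Quotient.mk I)).IsPrime := Ideal.comap_isPrime _ _
      have h := hmin (P.comap (Ideal.Quotient.mk I)) hPc ?_ ?_ ?_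
      · rw [← h, Ideal.map_comap_of_surjective _ hsurj]
      · intro x hx
        rw [Ideal.mem_comap, Ideal.Quotient.eq_zero_iff_mem.2 hx]
        exact P.zero_mem
      · intro j
        exact hsP (Ideal.subset_span ⟨j, rfl⟩)
      · rw [← hc]; exact Ideal.comap_mono hPn
  refine (Ideal.height_le_card_of_mem_minimalPrimes_span hfin hm).trans ?_
  have : (Set.range fun j => Ideal.Quotient.mk I (s j)).ncard ≤ k := by
    rw [← Set.image_univ]
    refine (Set.ncard_image_le Set.finite_univ).trans ?_
    simp [Set.ncard_univ]
  exact_mod_cast this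

lemma aeval_homog {n d : ℕ} {B : Type*} [CommRing B] [Algebra ℂ B] {f : MvPolynomial (Fin n) ℂ}
    (hf : f.IsHomogeneous d) (a : B) (g : Fin n → B) :
    aeval (fun i => a * g i) f = a ^ d * aeval g f := by
  rw [aeval_def, aeval_def, eval₂_eq', eval₂_eq', Finset.mul_sum]
  refine Finset.sum_congr rfl fun s hs => ?_
  have h1 : ∑ i, s i = d := by
    have := hf (mem_support_iff.1 hs)
    rw [← this, Finsupp.weight_apply, Finsupp.sum_fintype _ _ (by simp)]
    simp
  simp only [mul_pow, Finset.prod_mul_distrib, Finset.prod_pow_eq_pow_sum, h1]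
  ring

lemma tangent_sec {n k d : ℕ} {Y : Set (PrV n)} (hY : IsClosed Y) (hir : IsIrreducible Y)
    {z : Fin n → ℂ} (hz : z ∈ AC Y) (hfr : Module.finrank ℂ (affTangent Y z) = k + 1)
    (hkd : ringKrullDim (MvPolynomial (Fin n) ℂ ⧸ idealOf Y) = (k + 1 : ℕ))
    {f : MvPolynomial (Fin n) ℂ} (hf : f.IsHomogeneous d)
    (hfY : ∀ y ∈ AC Y, eval (y - z) f = 0) {q : Fin n → ℂ} (hq : q ∈ affTangent Y z) :
    eval q f = 0 := by
  by_cases hq0 : q = 0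
  · rw [hq0, ← sub_self z]; exact hfY z hz
  by_contra hne
  obtain ⟨lam, hlq, hlam⟩ := jac_fam hfr hq hq0
  obtain ⟨lam0, hlam0⟩ : ∃ μ : Module.Dual ℂ (Fin n → ℂ), μ q = 1 :=
    Module.Projective.exists_dual_eq_one ℂ hq0
  have hprime : (idealOf Y).IsPrime := prime_of_irred hir
  have hIz : idealOf Y ≤ ptI z := fun g hg => mem_ptI.2 (mem_idealOf.1 hg z hz)
  set n' := ptI z with hn'
  let J := idealOf Y ⊔ Ideal.span (Set.range fun j => linP z (lam j))
  let W : Fin n → MvPolynomial (Fin n) ℂ := fun i => X i - C (z i)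
  have hIJ : idealOf Y ≤ J := le_sup_left
  have hlJ : ∀ j, linP z (lam j) ∈ J := fun j =>
    Ideal.mem_sup_right (Ideal.subset_span ⟨j, rfl⟩)
  have hJ1 : J ≤ n' := by
    refine sup_le hIz (Ideal.span_le.2 ?_)
    rintro _ ⟨j, rfl⟩; exact linP_mem _ _
  have hJ2 : ∀ g ∈ J, jacLin g z q = 0 := by
    intro g hg
    obtain ⟨a, ha, y, hy, rfl⟩ := Submodule.mem_sup.1 hg
    rw [jacLin_add, LinearMap.add_apply, mem_affTangent.1 hq a ha, zero_add]
    have hyn : ∀ y ∈ Ideal.span (Set.range fun j => linP z (lam j)), eval z y = 0 := fun y hy =>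
      mem_ptI.1 (hJ1 (Ideal.mem_sup_right hy))
    refine Submodule.span_induction (p := fun y _ => jacLin y z q = 0) ?_ ?_ ?_ ?_ hy
    · rintro _ ⟨j, rfl⟩
      rw [jacLin_linP]; exact hlq j
    · exact LinearMap.congr_fun (map_zero (jacL z)) q
    · intro x y _ _ hx hy
      rw [jacLin_add, LinearMap.add_apply, hx, hy, add_zero]
    · intro a x hx h
      rw [smul_eq_mul, jacLin_mul, LinearMap.add_apply, LinearMap.smul_apply, LinearMap.smul_apply,
        h, hyn x hx]; simp
  have hmu : ∀ μ : Module.Dual ℂ (Fin n → ℂ), μ q = 0 → linP z μ ∈ J ⊔ n' ^ 2 := by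
    intro μ hμ
    obtain ⟨g, hg, c, rfl⟩ := hlam μ hμ
    rw [map_add]
    refine add_mem ?_ ?_
    · have ht := taylor z g
      rw [mem_ptI.1 (hIz hg), C_0, sub_zero] at ht
      have : linP z (jacLin g z) = g - (g - linP z (jacLin g z)) := by ring
      rw [this]
      exact sub_mem (Ideal.mem_sup_left (hIJ hg)) (Ideal.mem_sup_right ht)
    · rw [map_sum]
      refine sum_mem fun j _ => ?_
      rw [map_smul, smul_eq_C_mul]
      exact Ideal.mul_mem_left _ _ (Ideal.mem_sup_left (hlJ j))
  let L0 := linP z lam0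
  have hnle : n' ≤ (J ⊔ Ideal.span {L0}) ⊔ n' • n' := by
    refine ptI_le_of fun i => ?_
    have h1 := hmu (LinearMap.proj i - q i • lam0) (by simp [hlam0])
    rw [map_sub, map_smul, linP_proj, smul_eq_C_mul] at h1
    have h2 : X i - C (z i) = (X i - C (z i) - C (q i) * L0) + C (q i) * L0 := by ring
    rw [h2]
    refine add_mem ?_ ?_
    · have h3 : J ⊔ n' ^ 2 ≤ (J ⊔ Ideal.span {L0}) ⊔ n' • n' := by
        refine sup_le_sup le_sup_left (le_of_eq ?_)
        rw [pow_two]; rfl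
      exact h3 h1
    · exact Ideal.mem_sup_left (Ideal.mem_sup_right
        (Ideal.mul_mem_left _ _ (Ideal.mem_span_singleton_self _)))
  obtain ⟨r, hr1, hr⟩ := Submodule.exists_sub_one_mem_and_smul_le_of_fg_of_le_sup
    (IsNoetherian.noetherian n') le_rfl hnle
  have hWn : ∀ i, W i ∈ n' := fun i => by rw [mem_ptI]; simp [W]
  have hru : ∀ i, ∃ u, r * W i - u * L0 ∈ J := by
    intro i
    have h1 : r * W i ∈ J ⊔ Ideal.span {L0} :=
      hr (Submodule.smul_mem_pointwise_smul _ _ _ (hWn i))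
    obtain ⟨a, ha, y, hy, hay⟩ := Submodule.mem_sup.1 h1
    obtain ⟨u, rfl⟩ := Ideal.mem_span_singleton'.1 hy
    refine ⟨u, ?_⟩
    rw [← hay]; simpa using ha
  choose u hu using hru
  have hrz : eval z r = 1 := by
    have := mem_ptI.1 hr1
    simpa [sub_eq_zero] using this
  have huq : (fun i => eval z (u i)) = q := by
    funext i
    have h1 := hJ2 _ (hu i)
    have hL0 : eval z L0 = 0 := mem_ptI.1 (linP_mem _ _)
    have hW0 : eval z (W i) = 0 := mem_ptI.1 (hWn i)
    have hjW : jacLin (W i) z q = q i := by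
      simp only [W]
      rw [jacLin_sub, jacLin_C, LinearMap.sub_apply, jacLin_X]; simp
    have hjL : jacLin L0 z q = 1 := by rw [jacLin_linP]; exact hlam0
    rw [jacLin_sub, jacLin_mul, jacLin_mul] at h1
    simp only [LinearMap.sub_apply, LinearMap.add_apply, LinearMap.smul_apply, hL0, hW0, hrz, hjW,
      hjL, smul_eq_mul] at h1
    linear_combination -h1
  have hbW : bind₁ W f ∈ idealOf Y := by
    rw [mem_idealOf]
    intro y hy
    rw [eval_bind1]
    have : (fun i => eval y (W i)) = y - z := by funext i; simp [W]
    rw [this]; exact hfY y hy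
  have hhom : ∀ (a : MvPolynomial (Fin n) ℂ) (g : Fin n → MvPolynomial (Fin n) ℂ),
      bind₁ (fun i => a * g i) f = a ^ d * bind₁ g f := by
    intro a g
    exact aeval_homog hf a g
  have hcong : bind₁ (fun i => r * W i) f - bind₁ (fun i => L0 * u i) f ∈ J := by
    rw [← Ideal.Quotient.eq_zero_iff_mem, map_sub, sub_eq_zero]
    have : ∀ g : Fin n → MvPolynomial (Fin n) ℂ, Ideal.Quotient.mk J (bind₁ g f) =
        aeval (fun i => Ideal.Quotient.mk J (g i)) f := by
      intro g
      have := MvPolynomial.comp_aeval_apply g (Ideal.Quotient.mkₐ ℂ J) f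
      exact this
    rw [this, this]
    congr 2
    funext i
    rw [Ideal.Quotient.eq]
    have := hu i
    rwa [mul_comm (u i)] at this
  have hkey : L0 ^ d * bind₁ u f ∈ J := by
    rw [hhom, hhom] at hcong
    have h2 := J.sub_mem (J.mul_mem_left (r ^ d) (hIJ hbW)) hcong
    simpa using h2
  have hfu : bind₁ u f ∉ n' := by
    rw [mem_ptI, eval_bind1, huq]; exact hne
  obtain ⟨hmax, hht⟩ := height_map_le (idealOf Y) n' (ptI_max z) (fun j => linP z (lam j)) hIz
    (fun j => linP_mem _ _) (by
      intro P hP hIP hlP hPn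
      refine le_antisymm hPn (ptI_le_of fun i => ?_)
      have hJP : J ≤ P := sup_le hIP (Ideal.span_le.2 (by rintro _ ⟨j, rfl⟩; exact hlP j))
      have hL : L0 ∈ P := by
        rcases hP.mem_or_mem (hJP hkey) with h | h
        · exact hP.mem_of_pow_mem _ h
        · exact absurd (hPn h) hfu
      have h1 : r * W i ∈ P := by
        have := P.add_mem (hJP (hu i)) (P.mul_mem_left (u i) hL)
        simpa using this
      rcases hP.mem_or_mem h1 with h | h
      · have := mem_ptI.1 (hPn h)
        rw [hrz] at this
        exact absurd this one_ne_zero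
      · exact h)
  obtain ⟨s, g, -, -, hs1, hs2⟩ := exists_dim (B := MvPolynomial (Fin n) ℂ ⧸ idealOf Y)
  have h1 := hs2 _ hmax
  rw [hkd] at hs1
  have h2 : k + 1 = s := by exact_mod_cast hs1
  rw [h1, ← h2] at hht
  have : k + 1 ≤ k := by exact_mod_cast hht
  omega


lemma nondeg_iff {n : ℕ} {Y : Set (PrV n)} : NondegenerateSet Y ↔
    ∀ φ : (Fin n → ℂ) →ₗ[ℂ] ℂ, (∀ v ∈ AC Y, φ v = 0) → φ = 0 := by
  constructor
  · intro h φ hφ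
    by_contra h0
    exact h _ ⟨φ, h0, rfl⟩ fun x hx => hφ _ (rep_mem_AC.2 hx)
  · rintro h _ ⟨φ, h0, rfl⟩ hs
    refine h0 (h φ ?_)
    rintro v ⟨hv, hvY⟩
    obtain ⟨c, hc, hcv⟩ := exists_rep_smul hv
    have := hs hvY
    simp only [Set.mem_setOf_eq, hcv, map_smul, smul_eq_mul, mul_eq_zero, hc, false_or] at this
    exact this

lemma ideal_zero {n : ℕ} {Y : Set (PrV n)} (hY : Y.Nonempty) {f : MvPolynomial (Fin n) ℂ}
    (hf : f ∈ idealOf Y) : eval 0 f = 0 := mem_ptI.1 ((idealOf_lt hY).le hf)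

lemma secant_poly {n : ℕ} (hn : 2 ≤ n) {Y : Set (PrV n)} (hne : Y.Nonempty)
    (hnd : NondegenerateSet Y) (hs : secantVariety Y ≠ Set.univ) :
    ∃ d, ∃ f : MvPolynomial (Fin n) ℂ, f.IsHomogeneous d ∧ (∃ Q, eval Q f ≠ 0) ∧
      ∀ y ∈ AC Y, ∀ z ∈ AC Y, ∀ a c : ℂ, eval (a • y + c • z) f = 0 := by
  -- another point
  have hother : ∀ y ∈ Y, ∃ y' ∈ Y, y ≠ y' := by
    intro y hy
    by_contra! hall
    have hlt : Submodule.span ℂ {y.rep} < ⊤ := by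
      rw [lt_top_iff_ne_top]
      intro h
      have h1 := finrank_span_singleton (K := ℂ) y.rep_nonzero
      rw [h, finrank_top, Module.finrank_fin_fun] at h1
      omega
    obtain ⟨φ, h0, hφ⟩ := Submodule.exists_le_ker_of_lt_top _ hlt
    refine hnd _ ⟨φ, h0, rfl⟩ ?_
    intro x hx
    rw [← hall x hx]
    exact hφ (Submodule.mem_span_singleton_self _)
  have hsub : ∀ x ∈ Y, ∀ y ∈ Y, x ≠ y → lineThrough x y ⊆ secantVariety Y := by
    intro x hx y hy hxy
    refine subset_closure.trans' ?_
    intro p hp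
    simp only [Set.mem_iUnion]
    exact ⟨x, hx, y, hy, hxy, hp⟩
  have hself : Y ⊆ secantVariety Y := by
    intro y hy
    obtain ⟨y', hy', hyy⟩ := hother y hy
    exact hsub y hy y' hy' hyy (Submodule.subset_span (by simp))
  have hcl : IsClosed (secantVariety Y) := isClosed_closure
  obtain ⟨x, hx⟩ := (Set.ne_univ_iff_exists_notMem _).1 hs
  rw [← rep_mem_AC, mem_AC_closed hcl] at hx
  push Not at hx
  obtain ⟨g, hg, hgx⟩ := hx x.rep_nonzero
  obtain ⟨d, hd⟩ : ∃ d, eval x.rep (homogeneousComponent d g) ≠ 0 := by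
    by_contra! hall
    apply hgx
    rw [← sum_homogeneousComponent g, map_sum]
    exact Finset.sum_eq_zero fun i _ => hall i
  have hf := mem_idealOf_component hg d
  refine ⟨d, _, homogeneousComponent_isHomogeneous d g, ⟨_, hd⟩, ?_⟩
  intro y hy z hz a c
  by_cases h0 : a • y + c • z = 0
  · rw [h0]; exact ideal_zero (hne.mono hself) hf
  refine mem_idealOf.1 hf _ ((mem_AC_mk h0).2 ?_)
  obtain ⟨hy0, hyY⟩ := hy
  obtain ⟨hz0, hzY⟩ := hz
  obtain ⟨cy, hcy, hyr⟩ := exists_rep_smul hy0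
  obtain ⟨cz, hcz, hzr⟩ := exists_rep_smul hz0
  obtain ⟨cw, hcw, hwr⟩ := exists_rep_smul h0
  by_cases hyz : Projectivization.mk ℂ y hy0 = Projectivization.mk ℂ z hz0
  · obtain ⟨e, he⟩ := (Projectivization.mk_eq_mk_iff' ℂ _ _ hy0 hz0).1 hyz
    have : Projectivization.mk ℂ _ h0 = Projectivization.mk ℂ z hz0 := by
      rw [Projectivization.mk_eq_mk_iff']
      exact ⟨a * e + c, by rw [← he, add_smul, mul_smul]⟩
    rw [this]; exact hself hzY
  · refine hsub _ hyY _ hzY hyz ?_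
    change _ ∈ Submodule.span ℂ _
    rw [hwr, hyr, hzr]
    refine Submodule.smul_mem _ _ (Submodule.mem_span_pair.2 ⟨a * cy⁻¹, c * cz⁻¹, ?_⟩)
    rw [smul_smul, smul_smul, mul_assoc, mul_assoc, inv_mul_cancel₀ hcy, inv_mul_cancel₀ hcz,
      mul_one, mul_one]



/-- Pullback of polynomials along an affine map. -/
def pullA {a b : ℕ} (L : (Fin a → ℂ) →ₗ[ℂ] (Fin b → ℂ)) (c : Fin b → ℂ) :
    MvPolynomial (Fin b) ℂ →ₐ[ℂ] MvPolynomial (Fin a) ℂ :=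
  bind₁ fun i => linP 0 ((LinearMap.proj i).comp L) + C (c i)

lemma pullA_eval {a b : ℕ} (L : (Fin a → ℂ) →ₗ[ℂ] (Fin b → ℂ)) (c : Fin b → ℂ)
    (f : MvPolynomial (Fin b) ℂ) (v : Fin a → ℂ) :
    eval v (pullA L c f) = eval (L v + c) f := by
  rw [pullA, eval_bind1]
  congr 2
  funext i
  rw [map_add, linP_eval]; simp

lemma pullA_jac {a b : ℕ} (L : (Fin a → ℂ) →ₗ[ℂ] (Fin b → ℂ)) (c : Fin b → ℂ)
    (f : MvPolynomial (Fin b) ℂ) (v ξ : Fin a → ℂ) :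
    jacLin (pullA L c f) v ξ = jacLin f (L v + c) (L ξ) := by
  rw [pullA, jacLin_chain]
  congr 2
  · funext i
    rw [map_add, linP_eval]; simp
  · funext i
    rw [jacLin_add, jacLin_linP, jacLin_C]; simp

lemma poly_ext {n : ℕ} {f g : MvPolynomial (Fin n) ℂ} (h : ∀ v, eval v f = eval v g) : f = g :=
  MvPolynomial.funext h

section cone
variable {p k n : ℕ} (e : Fin p ⊕ Fin k ≃ Fin n)

/-- First projection. -/
def prF : (Fin n → ℂ) →ₗ[ℂ] (Fin p → ℂ) := LinearMap.funLeft ℂ ℂ (fun i => e (Sum.inl i))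

/-- Inclusion of the first factor. -/
def inF : (Fin p → ℂ) →ₗ[ℂ] (Fin n → ℂ) where
  toFun z := fun j => Sum.elim z 0 (e.symm j)
  map_add' z z' := by
    funext j; rcases h : e.symm j with i | i <;> simp [h]
  map_smul' c z := by
    funext j; rcases h : e.symm j with i | i <;> simp [h]

/-- Inclusion of the second factor. -/
def inS : (Fin k → ℂ) →ₗ[ℂ] (Fin n → ℂ) where
  toFun z := fun j => Sum.elim 0 z (e.symm j)
  map_add' z z' := by
    funext j; rcases h : e.symm j with i | i <;> simp [h]
  map_smul' c z := by
    funext j; rcases h : e.symm j with i | i <;> simp [h]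

@[simp] lemma prF_inF (z : Fin p → ℂ) : prF e (inF e z) = z := by
  funext i; simp [prF, inF, LinearMap.funLeft]

@[simp] lemma prF_inS (t : Fin k → ℂ) : prF e (inS e t) = 0 := by
  funext i; simp [prF, inS, LinearMap.funLeft]

lemma inS_inj : Function.Injective (inS e) := by
  intro s t h
  funext i
  have := congrFun h (e (Sum.inr i))
  simpa [inS] using this

lemma dec (v : Fin n → ℂ) : ∃ t, v = inF e (prF e v) + inS e t := by
  refine ⟨fun i => v (e (Sum.inr i)), ?_⟩
  funext j
  obtain ⟨s, rfl⟩ := e.surjective j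
  rcases s with i | i <;> simp [inF, inS, prF, LinearMap.funLeft]

lemma dec_ker {v : Fin n → ℂ} (h : prF e v = 0) : ∃ t, v = inS e t := by
  obtain ⟨t, ht⟩ := dec e v
  exact ⟨t, by rw [ht, h]; simp⟩

/-- `Y'` is the cone over `Y`. -/
def IsCone (Y : Set (PrV p)) (Y' : Set (PrV n)) : Prop :=
  ∀ x, x ∈ AC Y' ↔ x ≠ 0 ∧ (prF e x = 0 ∨ prF e x ∈ AC Y)

variable {e} {Y : Set (PrV p)} {Y' : Set (PrV n)}

lemma cone_ideal (h : IsCone e Y Y') (hne : Y.Nonempty) {f : MvPolynomial (Fin n) ℂ} :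
    f ∈ idealOf Y' ↔ ∀ z ∈ AC Y, ∀ t, eval (inF e z + inS e t) f = 0 := by
  rw [mem_idealOf]
  constructor
  · intro hf z hz t
    refine hf _ ((h _).2 ⟨?_, Or.inr (by simpa using hz)⟩)
    intro h0
    have := congrArg (prF e) h0
    simp only [map_add, prF_inF, prF_inS, add_zero, map_zero] at this
    exact AC_ne hz this
  · intro hf v hv
    obtain ⟨hv0, hv | hv⟩ := (h _).1 hv
    · obtain ⟨t, rfl⟩ := dec_ker e hv
      have : pullA (inF e) (inS e t) f ∈ idealOf Y := by
        rw [mem_idealOf]; intro z hz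
        rw [pullA_eval]; exact hf z hz t
      have := ideal_zero hne this
      rw [pullA_eval] at this
      simpa using this
    · obtain ⟨t, ht⟩ := dec e v
      rw [ht]; exact hf _ hv t

lemma cone_slice (h : IsCone e Y Y') (hne : Y.Nonempty) {f : MvPolynomial (Fin n) ℂ}
    (hf : f ∈ idealOf Y') (t : Fin k → ℂ) : pullA (inF e) (inS e t) f ∈ idealOf Y := by
  rw [mem_idealOf]; intro z hz
  rw [pullA_eval]; exact (cone_ideal h hne).1 hf z hz t

lemma cone_pull (h : IsCone e Y Y') (hne : Y.Nonempty) {f : MvPolynomial (Fin p) ℂ}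
    (hf : f ∈ idealOf Y) : pullA (prF e) 0 f ∈ idealOf Y' := by
  rw [cone_ideal h hne]; intro z hz t
  rw [pullA_eval]; simpa using mem_idealOf.1 hf z hz

lemma cone_closed (h : IsCone e Y Y') (hne : Y.Nonempty) (hY : IsClosed Y) : IsClosed Y' := by
  apply closed_of_AC
  intro v hv hf
  rw [h]
  refine ⟨hv, ?_⟩
  by_cases h0 : prF e v = 0
  · exact Or.inl h0
  · refine Or.inr ((mem_AC_closed hY).2 ⟨h0, fun f hfY => ?_⟩)
    have := hf _ (cone_pull h hne hfY)
    rw [pullA_eval] at this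
    simpa using this

lemma cone_nondeg (h : IsCone e Y Y') (hnd : NondegenerateSet Y) : NondegenerateSet Y' := by
  rw [nondeg_iff] at hnd ⊢
  intro φ hφ
  have h1 : ∀ t, φ (inS e t) = 0 := by
    intro t
    by_cases h0 : inS e t = 0
    · rw [h0, map_zero]
    · exact hφ _ ((h _).2 ⟨h0, Or.inl (by simp)⟩)
  have h2 := hnd (φ.comp (inF e)) (fun v hv => hφ _ ((h _).2 ⟨by
    intro h0
    have := congrArg (prF e) h0
    simp only [prF_inF, map_zero] at this
    exact AC_ne hv this, Or.inr (by simpa using hv)⟩))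
  refine LinearMap.ext fun v => ?_
  obtain ⟨t, ht⟩ := dec e v
  rw [ht, map_add, h1, add_zero]
  exact LinearMap.congr_fun h2 _

/-- The presentation of the coordinate ring of the cone. -/
def conePsi (e : Fin p ⊕ Fin k ≃ Fin n) (I : Ideal (MvPolynomial (Fin p) ℂ)) :
    MvPolynomial (Fin n) ℂ →ₐ[ℂ] MvPolynomial (Fin k) (MvPolynomial (Fin p) ℂ ⧸ I) :=
  aeval fun j => Sum.elim (fun i => C (Ideal.Quotient.mk I (X i))) X (e.symm j)

lemma conePsi_surj (I : Ideal (MvPolynomial (Fin p) ℂ)) : Function.Surjective (conePsi e I) := by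
  intro q
  induction q using MvPolynomial.induction_on with
  | C c =>
    obtain ⟨g, rfl⟩ := Ideal.Quotient.mk_surjective c
    induction g using MvPolynomial.induction_on with
    | C c => exact ⟨C c, by simp [conePsi]; rfl⟩
    | add f g hf hg =>
      obtain ⟨f', hf'⟩ := hf
      obtain ⟨g', hg'⟩ := hg
      exact ⟨f' + g', by rw [map_add, hf', hg']; simp⟩
    | mul_X f i hf =>
      obtain ⟨f', hf'⟩ := hf
      exact ⟨f' * X (e (Sum.inl i)), by rw [map_mul, hf']; simp [conePsi]⟩
  | add f g hf hg =>
    obtain ⟨f', hf'⟩ := hf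
    obtain ⟨g', hg'⟩ := hg
    exact ⟨f' + g', by rw [map_add, hf', hg']⟩
  | mul_X f i hf =>
    obtain ⟨f', hf'⟩ := hf
    exact ⟨f' * X (e (Sum.inr i)), by rw [map_mul, hf']; simp [conePsi]⟩

lemma conePsi_ker (h : IsCone e Y Y') (hne : Y.Nonempty) :
    RingHom.ker (conePsi e (idealOf Y)) = idealOf Y' := by
  have hI : ∀ z ∈ AC Y, ∀ a ∈ idealOf Y, eval z a = 0 := fun z hz a ha => mem_idealOf.1 ha z hz
  have key : ∀ z (hz : z ∈ AC Y) t f,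
      eval t (map (Ideal.Quotient.lift (idealOf Y) (eval z) (hI z hz)) (conePsi e (idealOf Y) f))
        = eval (inF e z + inS e t) f := by
    intro z hz t f
    induction f using MvPolynomial.induction_on with
    | C c =>
      have : conePsi e (idealOf Y) (C c) = C (Ideal.Quotient.mk (idealOf Y) (C c)) := by
        simp [conePsi]; rfl
      rw [this]; simp
    | add f g hf hg => simp [hf, hg]
    | mul_X f i hf =>
      rw [map_mul, map_mul, map_mul, hf, map_mul]
      congr 1
      obtain ⟨s, rfl⟩ := e.surjective i
      rcases s with i | i <;> simp [conePsi, inF, inS]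
  ext f
  rw [RingHom.mem_ker, cone_ideal h hne]
  constructor
  · intro hf z hz t
    rw [← key z hz, hf]; simp
  · intro hf
    ext s
    obtain ⟨c, hc⟩ := Ideal.Quotient.mk_surjective (coeff s (conePsi e (idealOf Y) f))
    rw [← hc, coeff_zero, Ideal.Quotient.eq_zero_iff_mem, mem_idealOf]
    intro z hz
    have : map (Ideal.Quotient.lift (idealOf Y) (eval z) (hI z hz)) (conePsi e (idealOf Y) f)
        = 0 := by
      apply poly_ext
      intro t
      rw [key z hz, hf z hz t, map_zero]
    have := congrArg (coeff s) this
    rw [coeff_map, ← hc] at this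
    simpa using this

lemma cone_prime (h : IsCone e Y Y') (hir : IsIrreducible Y) : (idealOf Y').IsPrime := by
  have := prime_of_irred hir
  rw [← conePsi_ker h hir.1]
  exact RingHom.ker_isPrime _

lemma krull_of_surj {R S : Type*} [CommRing R] [CommRing S] (f : R →+* S)
    (hf : Function.Surjective f) {I : Ideal R} (hI : ∀ x, f x = 0 ↔ x ∈ I) :
    ringKrullDim (R ⧸ I) = ringKrullDim S := by
  obtain rfl : RingHom.ker f = I := by ext x; exact hI x
  exact ringKrullDim_eq_of_ringEquiv (RingHom.quotientKerEquivOfSurjective hf)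

lemma krull_mv {B : Type*} [CommRing B] [IsNoetherianRing B] (k : ℕ) :
    ringKrullDim (MvPolynomial (Fin k) B) = ringKrullDim B + k := by
  rw [MvPolynomial.ringKrullDim_of_isNoetherianRing]; simp

lemma cone_dim (h : IsCone e Y Y') (hir : IsIrreducible Y) :
    ringKrullDim (MvPolynomial (Fin n) ℂ ⧸ idealOf Y') =
      ringKrullDim (MvPolynomial (Fin p) ℂ ⧸ idealOf Y) + k := by
  have hk : ∀ x, (conePsi e (idealOf Y)).toRingHom x = 0 ↔ x ∈ idealOf Y' := by
    intro x
    rw [← conePsi_ker h hir.1]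
    exact Iff.rfl
  have h1 := krull_of_surj (R := MvPolynomial (Fin n) ℂ)
    (S := MvPolynomial (Fin k) (MvPolynomial (Fin p) ℂ ⧸ idealOf Y))
    (conePsi e (idealOf Y)).toRingHom (conePsi_surj _) (I := idealOf Y') hk
  rw [h1]
  exact krull_mv k

lemma cone_tangent (h : IsCone e Y Y') (hne : Y.Nonempty) {v ξ : Fin n → ℂ}
    (hξ : ξ ∈ affTangent Y' v) : prF e ξ ∈ affTangent Y (prF e v) := by
  rw [mem_affTangent] at hξ ⊢
  intro f hf
  have := hξ _ (cone_pull h hne hf)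
  rw [pullA_jac] at this
  simpa using this

lemma cone_tangent_conv (h : IsCone e Y Y') (hne : Y.Nonempty) {v ξ : Fin n → ℂ}
    (hv : prF e v ∈ AC Y)
    (hξ : prF e ξ ∈ affTangent Y (prF e v)) : ξ ∈ affTangent Y' v := by
  rw [mem_affTangent] at hξ ⊢
  intro f hf
  obtain ⟨t, ht⟩ := dec e v
  obtain ⟨s, hs⟩ := dec e ξ
  have h1 := hξ _ (cone_slice h hne hf t)
  rw [pullA_jac, ← ht] at h1
  rw [hs, map_add, h1, zero_add]
  refine jacLin_line f v _ fun c _ => ?_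
  rw [ht, add_assoc, ← map_smul, ← map_add]
  exact (cone_ideal h hne).1 hf _ hv _

lemma cone_vertex (h : IsCone e Y Y') (hne : Y.Nonempty) (hnd : NondegenerateSet Y)
    {v ξ : Fin n → ℂ} (hv : prF e v = 0) : ξ ∈ affTangent Y' v := by
  rw [mem_affTangent]
  intro f hf
  obtain ⟨t, rfl⟩ := dec_ker e hv
  have hz : (jacLin f (inS e t)).comp (inF e) = 0 := by
    refine nondeg_iff.1 hnd _ fun z hz => ?_
    refine jacLin_line f _ _ fun c hc => ?_
    rw [add_comm, ← map_smul]
    exact (cone_ideal h hne).1 hf _ (AC_smul hz hc) _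
  obtain ⟨s, hs⟩ := dec e ξ
  rw [hs, map_add]
  have h1 : jacLin f (inS e t) (inF e (prF e ξ)) = 0 := LinearMap.congr_fun hz _
  rw [h1, zero_add]
  refine jacLin_line f _ _ fun c _ => ?_
  rw [← map_smul, ← map_add]
  have := ideal_zero hne (cone_slice h hne hf (t + c • s))
  rw [pullA_eval] at this
  simpa using this

lemma cone_tangent_finrank (h : IsCone e Y Y') (hne : Y.Nonempty) {v : Fin n → ℂ}
    (hv : prF e v ∈ AC Y) : Module.finrank ℂ (affTangent Y' v) =
      Module.finrank ℂ (affTangent Y (prF e v)) + k := by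
  have h1 : affTangent Y' v = (affTangent Y (prF e v)).comap (prF e) :=
    le_antisymm (fun ξ hξ => cone_tangent h hne hξ) (fun ξ hξ => cone_tangent_conv h hne hv hξ)
  let φ : (affTangent Y' v) →ₗ[ℂ] (affTangent Y (prF e v)) :=
    (prF e).restrict (fun ξ hξ => cone_tangent h hne hξ)
  have hs : Function.Surjective φ := by
    rintro ⟨ζ, hζ⟩
    refine ⟨⟨inF e ζ, cone_tangent_conv h hne hv (by simpa using hζ)⟩, ?_⟩
    apply Subtype.ext; simp [φ]
  let ψ : (Fin k → ℂ) →ₗ[ℂ] (affTangent Y' v) :=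
    (inS e).codRestrict _ (fun t => cone_tangent_conv h hne hv (by simp))
  have hker : LinearMap.ker φ = LinearMap.range ψ := by
    ext ⟨ξ, hξ⟩
    rw [LinearMap.mem_ker, LinearMap.mem_range]
    constructor
    · intro h0
      obtain ⟨t, ht⟩ := dec_ker e (congrArg Subtype.val h0 : prF e ξ = 0)
      exact ⟨t, Subtype.ext ht.symm⟩
    · rintro ⟨t, ht⟩
      rw [← ht]; apply Subtype.ext
      simp [φ, ψ]
  have hψ : Function.Injective ψ := by
    intro s t hst
    exact inS_inj e (congrArg Subtype.val hst)
  have h2 := LinearMap.finrank_range_add_finrank_ker φ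
  rw [hker, LinearMap.finrank_range_of_inj hψ, LinearMap.range_eq_top.2 hs, finrank_top,
    Module.finrank_fin_fun] at h2
  omega

end cone


lemma pdim_linear {a b : ℕ} (j : (Fin (b+1) → ℂ) →ₗ[ℂ] (Fin a → ℂ)) (hj : Function.Injective j)
    {V : Set (PrV a)} (hV : ∀ x, x ∈ AC V ↔ x ≠ 0 ∧ ∃ t, x = j t) :
    pdim V = ((b : ℕ∞) : WithBot ℕ∞) := by
  obtain ⟨ρ, hρ⟩ := LinearMap.exists_leftInverse_of_injective j (LinearMap.ker_eq_bot.2 hj)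
  have hρ' : ∀ t, ρ (j t) = t := fun t => LinearMap.congr_fun hρ t
  have hmem : ∀ t, t ≠ 0 → j t ∈ AC V := fun t ht =>
    (hV _).2 ⟨fun h => ht (hj (by rw [h, map_zero])), t, rfl⟩
  have hne : V.Nonempty := by
    have h1 : (fun _ => 1 : Fin (b+1) → ℂ) ≠ 0 := fun h => one_ne_zero (congrFun h 0)
    obtain ⟨_, h⟩ := hmem _ h1
    exact ⟨_, h⟩
  have hI : ∀ f, f ∈ idealOf V ↔ ∀ t, eval (j t) f = 0 := by
    intro f
    constructor
    · intro hf t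
      by_cases ht : t = 0
      · rw [ht, map_zero]; exact ideal_zero hne hf
      · exact mem_idealOf.1 hf _ (hmem t ht)
    · intro h
      rw [mem_idealOf]
      intro v hv
      obtain ⟨_, t, rfl⟩ := (hV v).1 hv
      exact h t
  have hk : ∀ x, (pullA j 0).toRingHom x = 0 ↔ x ∈ idealOf V := by
    intro f
    rw [hI]
    change pullA j 0 f = 0 ↔ _
    constructor
    · intro h t
      have := congrArg (eval t) h
      rw [pullA_eval] at this
      simpa using this
    · intro h
      apply poly_ext; intro t
      rw [pullA_eval, add_zero, h t, map_zero]
  have hs : Function.Surjective (pullA j 0) := by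
    intro f
    refine ⟨pullA ρ 0 f, poly_ext fun v => ?_⟩
    rw [pullA_eval, pullA_eval, add_zero, add_zero, hρ']
  have hdim := krull_of_surj (pullA j 0).toRingHom hs hk
  have hcl : IsClosed V := by
    apply closed_of_AC
    intro v hv hf
    rw [hV]
    refine ⟨hv, ρ v, ?_⟩
    funext i
    have := hf (linP 0 ((LinearMap.proj i).comp (LinearMap.id - j.comp ρ))) ?_
    · rw [linP_eval] at this
      simpa [sub_eq_zero] using this
    · rw [hI]; intro t
      rw [linP_eval]
      simp [hρ']
  have hpr : (idealOf V).IsPrime := by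
    have : RingHom.ker (pullA j 0).toRingHom = idealOf V := by ext x; exact hk x
    rw [← this]
    exact RingHom.ker_isPrime _
  have h1 := pdim_add_one hcl (irred_of_prime hne hpr)
  rw [hdim, krull_mv, ringKrullDim_eq_zero_of_field, zero_add] at h1
  have h2 : pdim V + 1 = ((b : ℕ∞) : WithBot ℕ∞) + 1 := by
    rw [h1]; push_cast; rfl
  exact le_antisymm (wb_cancel h2.le) (wb_cancel h2.ge)



lemma monic_aux {n d : ℕ} {B : Type*} [CommRing B] [Algebra ℂ B] {f : MvPolynomial (Fin n) ℂ}
    (hf : f.IsHomogeneous d) (a : Fin n → B) (q : Fin n → ℂ) :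
    (aeval (fun i => Polynomial.C (a i) + Polynomial.C (algebraMap ℂ B (q i)) * Polynomial.X)
      f : Polynomial B).natDegree ≤ d ∧
    (aeval (fun i => Polynomial.C (a i) + Polynomial.C (algebraMap ℂ B (q i)) * Polynomial.X)
      f : Polynomial B).coeff d = algebraMap ℂ B (eval q f) := by
  have hlin : ∀ i, (Polynomial.C (a i) + Polynomial.C (algebraMap ℂ B (q i)) *
      Polynomial.X).natDegree ≤ 1 := by
    intro i
    refine Polynomial.natDegree_add_le_of_degree_le (by simp) ?_
    exact (Polynomial.natDegree_C_mul_le _ _).trans Polynomial.natDegree_X_le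
  have hpow : ∀ i (m : ℕ), ((Polynomial.C (a i) + Polynomial.C (algebraMap ℂ B (q i)) *
      Polynomial.X) ^ m).natDegree ≤ m ∧ ((Polynomial.C (a i) + Polynomial.C (algebraMap ℂ B (q i)) *
      Polynomial.X) ^ m).coeff m = algebraMap ℂ B (q i ^ m) := by
    intro i m
    refine ⟨(Polynomial.natDegree_pow_le_of_le m (hlin i)).trans (by simp), ?_⟩
    have := Polynomial.coeff_pow_of_natDegree_le (m := m) (hlin i)
    rw [mul_one] at this
    rw [this]; simp
  have hprod : ∀ (s : Fin n →₀ ℕ) (t : Finset (Fin n)),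
      (∏ i ∈ t, (Polynomial.C (a i) + Polynomial.C (algebraMap ℂ B (q i)) *
        Polynomial.X) ^ s i).natDegree ≤ ∑ i ∈ t, s i ∧
      (∏ i ∈ t, (Polynomial.C (a i) + Polynomial.C (algebraMap ℂ B (q i)) *
        Polynomial.X) ^ s i).coeff (∑ i ∈ t, s i) = algebraMap ℂ B (∏ i ∈ t, q i ^ s i) := by
    intro s t
    induction t using Finset.induction_on with
    | empty => simp
    | insert i t hi ih =>
      rw [Finset.prod_insert hi, Finset.sum_insert hi, Finset.prod_insert hi]
      refine ⟨Polynomial.natDegree_mul_le_of_le (hpow i _).1 ih.1, ?_⟩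
      rw [Polynomial.coeff_mul_add_eq_of_natDegree_le (hpow i _).1 ih.1, ih.2, (hpow i _).2, map_mul]
  have hdeg : ∀ s ∈ f.support, ∑ i, s i = d := by
    intro s hs
    have := hf (mem_support_iff.1 hs)
    rw [← this, Finsupp.weight_apply, Finsupp.sum_fintype _ _ (by simp)]
    simp
  rw [aeval_def, eval₂_eq']
  constructor
  · refine Polynomial.natDegree_sum_le_of_forall_le _ _ fun s hs => ?_
    rw [← hdeg s hs]
    refine (Polynomial.natDegree_C_mul_le (algebraMap ℂ B (f.coeff s)) _).trans (hprod s _).1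
  · rw [Polynomial.finsetSum_coeff, eval_eq', map_sum]
    refine Finset.sum_congr rfl fun s hs => ?_
    have := (hprod s Finset.univ).2
    rw [hdeg s hs] at this
    rw [map_mul, ← this]
    exact Polynomial.coeff_C_mul _

lemma krull_integral {R S : Type} [CommRing R] [IsDomain R] [Algebra ℂ R]
    [Algebra.FiniteType ℂ R] [CommRing S] [IsDomain S] [Algebra ℂ S] [IsNoetherianRing S]
    (ψ : R →+* S) (hinj : Function.Injective ψ) (hint : ψ.IsIntegral) :
    ringKrullDim S = ringKrullDim R := by
  obtain ⟨s, g, hg1, hg2, hs, -⟩ := exists_dim (B := R)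
  rw [hs]
  exact (dim_of_integral s (ψ.comp g) (hinj.comp hg1) (RingHom.IsIntegral.trans g ψ hg2 hint)).1

lemma krull_integral' {R S : Type} [CommRing R] [Algebra ℂ R]
    [Algebra.FiniteType ℂ R] [CommRing S] [IsDomain S] [Algebra ℂ S] [IsNoetherianRing S]
    (ψ : R →+* S) (I : Ideal R) (hI : ∀ x, ψ x = 0 ↔ x ∈ I) (hint : ψ.IsIntegral) :
    ringKrullDim S = ringKrullDim (R ⧸ I) := by
  obtain rfl : RingHom.ker ψ = I := by ext x; exact hI x
  have : (RingHom.ker ψ).IsPrime := RingHom.ker_isPrime ψ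
  refine krull_integral (RingHom.kerLift ψ) (RingHom.kerLift_injective ψ) ?_
  have hc : (RingHom.kerLift ψ).comp (Ideal.Quotient.mk (RingHom.ker ψ)) = ψ := by
    ext x; rfl
  rw [← hc] at hint
  exact RingHom.IsIntegral.tower_top _ _ hint



/-- Data of an injective linear projection from a point. -/
structure PD {n a : ℕ} (Y : Set (PrV n)) (X : Set (PrV a))
    (L : (Fin n → ℂ) →ₗ[ℂ] (Fin a → ℂ)) (σ : (Fin a → ℂ) →ₗ[ℂ] (Fin n → ℂ))
    (l : (Fin n → ℂ) →ₗ[ℂ] ℂ) (Q : Fin n → ℂ) (d : ℕ) (F : MvPolynomial (Fin n) ℂ) : Prop where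
  cl : IsClosed Y
  pr : (idealOf Y).IsPrime
  ne : Y.Nonempty
  ls : ∀ y, L (σ y) = y
  lq : L Q = 0
  dec : ∀ x, x = σ (L x) + l x • Q
  hF : F ∈ idealOf Y
  hd : F.IsHomogeneous d
  hFQ : eval Q F = 1
  inj : ∀ x ∈ AC Y, ∀ y ∈ AC Y, L x = L y → x = y
  l0 : ∀ x ∈ AC Y, L x ≠ 0
  hX : ∀ v, v ∈ AC X ↔ ∃ x ∈ AC Y, v = L x

lemma max_eq_ptI {n : ℕ} (M : Ideal (MvPolynomial (Fin n) ℂ)) (hM : M.IsMaximal) :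
    ∃ x, M = ptI x := by
  obtain ⟨x, hx⟩ := (isMaximal_iff_eq_vanishingIdeal_singleton (K := ℂ)).1 hM
  refine ⟨x, ?_⟩
  ext f
  rw [hx, mem_ptI, mem_vanishingIdeal_singleton_iff]
  simp [aeval_eq_eval]

lemma ptI_inj {n : ℕ} {x y : Fin n → ℂ} (h : ptI x ≤ ptI y) : x = y := by
  funext i
  have : X i - C (x i) ∈ ptI y := h (by rw [mem_ptI]; simp)
  rw [mem_ptI] at this
  simp [sub_eq_zero] at this
  exact this.symm

section
variable {n a : ℕ} {Y : Set (PrV n)} {X : Set (PrV a)}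
    {L : (Fin n → ℂ) →ₗ[ℂ] (Fin a → ℂ)} {σ : (Fin a → ℂ) →ₗ[ℂ] (Fin n → ℂ)}
    {l : (Fin n → ℂ) →ₗ[ℂ] ℂ} {Q : Fin n → ℂ} {d : ℕ} {F : MvPolynomial (Fin n) ℂ}

lemma PD.ideal (h : PD Y X L σ l Q d F) {f : MvPolynomial (Fin a) ℂ} :
    f ∈ idealOf X ↔ pullA L 0 f ∈ idealOf Y := by
  rw [mem_idealOf, mem_idealOf]
  constructor
  · intro hf x hx
    rw [pullA_eval, add_zero]
    exact hf _ ((h.hX _).2 ⟨x, hx, rfl⟩)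
  · intro hf v hv
    obtain ⟨x, hx, rfl⟩ := (h.hX _).1 hv
    have := hf x hx
    rwa [pullA_eval, add_zero] at this

lemma PD.prime (h : PD Y X L σ l Q d F) : (idealOf X).IsPrime := by
  have h1 : idealOf X = (idealOf Y).comap (pullA L 0) := by
    ext f; rw [h.ideal]; rfl
  have := h.pr
  rw [h1]; exact Ideal.comap_isPrime _ _

lemma PD.nonempty (h : PD Y X L σ l Q d F) : X.Nonempty := by
  obtain ⟨x, hx⟩ := h.ne
  obtain ⟨_, h1⟩ := (h.hX _).2 ⟨_, rep_mem_AC.2 hx, rfl⟩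
  exact ⟨_, h1⟩

/-- The comorphism. -/
def psi (Y : Set (PrV n)) (L : (Fin n → ℂ) →ₗ[ℂ] (Fin a → ℂ)) :
    MvPolynomial (Fin a) ℂ →+* MvPolynomial (Fin n) ℂ ⧸ idealOf Y :=
  (Ideal.Quotient.mk (idealOf Y)).comp (pullA L 0).toRingHom

lemma psi_apply (f : MvPolynomial (Fin a) ℂ) :
  psi Y L f = Ideal.Quotient.mk (idealOf Y) (pullA L 0 f) := rfl

lemma PD.psi_ker (h : PD Y X L σ l Q d F) (f : MvPolynomial (Fin a) ℂ) :
    psi Y L f = 0 ↔ f ∈ idealOf X := by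
  rw [h.ideal, psi_apply, Ideal.Quotient.eq_zero_iff_mem]

lemma eval2_lin {B D : Type*} [CommRing B] [Algebra ℂ B] [CommRing D] [Algebra ℂ D] {n : ℕ}
    (φ : B →ₐ[ℂ] D) (u : D) (a : Fin n → B) (q : Fin n → ℂ) (f : MvPolynomial (Fin n) ℂ) :
    Polynomial.eval₂ φ.toRingHom u (aeval (fun i => Polynomial.C (a i) +
      Polynomial.C (algebraMap ℂ B (q i)) * Polynomial.X) f) =
    aeval (fun i => φ (a i) + algebraMap ℂ D (q i) * u) f := by
  induction f using MvPolynomial.induction_on with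
  | C c =>
    rw [aeval_C, aeval_C]
    have : algebraMap ℂ (Polynomial B) c = Polynomial.C (algebraMap ℂ B c) := rfl
    rw [this, Polynomial.eval₂_C]
    exact φ.commutes c
  | add f g hf hg => rw [map_add, Polynomial.eval₂_add, hf, hg, map_add]
  | mul_X f i hf =>
    rw [map_mul, Polynomial.eval₂_mul, hf, map_mul]
    congr 1
    rw [aeval_X, aeval_X]
    simp

lemma PD.coord (h : PD Y X L σ l Q d F) (i : Fin n) :
    pullA L 0 (linP 0 ((LinearMap.proj i).comp σ)) +
      algebraMap ℂ (MvPolynomial (Fin n) ℂ) (Q i) * linP 0 l = MvPolynomial.X i := by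
  apply poly_ext; intro v
  rw [map_add, map_mul, pullA_eval, linP_eval, linP_eval]
  have h3 := congrFun (h.dec v) i
  rw [eval_X, h3]; simp [mul_comm, algebraMap_eq]

lemma PD.int_u (h : PD Y X L σ l Q d F) :
    (psi Y L).IsIntegralElem (Ideal.Quotient.mk (idealOf Y) (linP 0 l)) := by
  obtain ⟨h1, h2⟩ := monic_aux (B := MvPolynomial (Fin a) ℂ) h.hd
    (fun i => linP 0 ((LinearMap.proj i).comp σ)) Q
  refine ⟨_, Polynomial.monic_of_natDegree_le_of_coeff_eq_one d h1 (by rw [h2, h.hFQ, map_one]),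
    ?_⟩
  rw [psi, ← Polynomial.hom_eval₂, Ideal.Quotient.eq_zero_iff_mem, eval2_lin]
  have : (fun i => pullA L 0 (linP 0 ((LinearMap.proj i).comp σ)) +
      algebraMap ℂ (MvPolynomial (Fin n) ℂ) (Q i) * linP 0 l) = MvPolynomial.X := by
    funext i; exact h.coord i
  rw [this, aeval_X_left]
  exact h.hF

lemma PD.integral (h : PD Y X L σ l Q d F) : (psi Y L).IsIntegral := by
  have hu := h.int_u
  intro s
  obtain ⟨f, rfl⟩ := Ideal.Quotient.mk_surjective s
  induction f using MvPolynomial.induction_on with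
  | C c =>
    have : Ideal.Quotient.mk (idealOf Y) (C c) = psi Y L (C c) := by
      rw [psi_apply]; simp [pullA]
    rw [this]; exact RingHom.isIntegralElem_map _
  | add f g hf hg => rw [map_add]; exact hf.add _ hg
  | mul_X f i hf =>
    rw [map_mul]
    refine hf.mul _ ?_
    have h3 : pullA L 0 (C (Q i)) = algebraMap ℂ (MvPolynomial (Fin n) ℂ) (Q i) := by
      simp [pullA, algebraMap_eq]
    rw [← h.coord i, ← h3, map_add, map_mul, ← psi_apply, ← psi_apply]
    exact (RingHom.isIntegralElem_map _).add _ ((RingHom.isIntegralElem_map _).mul _ hu)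

lemma PD.krull (h : PD Y X L σ l Q d F) :
    ringKrullDim (MvPolynomial (Fin n) ℂ ⧸ idealOf Y) =
      ringKrullDim (MvPolynomial (Fin a) ℂ ⧸ idealOf X) := by
  have := h.pr
  exact krull_integral' (psi Y L) (idealOf X) h.psi_ker h.integral

lemma mem_cone_of_ideal (hcl : IsClosed Y) {x : Fin n → ℂ} (h : idealOf Y ≤ ptI x) (hx : x ≠ 0) :
    x ∈ AC Y := (mem_AC_closed hcl).2 ⟨hx, fun f hf => mem_ptI.1 (h hf)⟩

lemma PD.closed (h : PD Y X L σ l Q d F) : IsClosed X := by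
  apply closed_of_AC
  intro v hv hf
  algebraize [psi Y L]
  have hint : Algebra.IsIntegral (MvPolynomial (Fin a) ℂ) (MvPolynomial (Fin n) ℂ ⧸ idealOf Y) :=
    ⟨h.integral⟩
  obtain ⟨M, hM, hMv⟩ := Ideal.exists_ideal_over_maximal_of_isIntegral
    (S := MvPolynomial (Fin n) ℂ ⧸ idealOf Y) (ptI v)
    (fun f hf' => mem_ptI.2 (hf f ((h.psi_ker f).1 hf')))
  have hM' : (M.comap (Ideal.Quotient.mk (idealOf Y))).IsMaximal :=
    Ideal.comap_isMaximal_of_surjective _ Ideal.Quotient.mk_surjective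
  obtain ⟨x, hx⟩ := max_eq_ptI _ hM'
  have hIx : idealOf Y ≤ ptI x := by
    rw [← hx]; intro f hf
    rw [Ideal.mem_comap, Ideal.Quotient.eq_zero_iff_mem.2 hf]; exact M.zero_mem
  have hLx : v = L x := by
    apply ptI_inj
    rw [← hMv]
    intro f hf
    have h1 : pullA L 0 f ∈ M.comap (Ideal.Quotient.mk (idealOf Y)) := hf
    rw [hx, mem_ptI, pullA_eval, add_zero] at h1
    exact mem_ptI.2 h1
  have hx0 : x ≠ 0 := by
    rintro rfl
    exact hv (by rw [hLx, map_zero])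
  exact (h.hX _).2 ⟨x, mem_cone_of_ideal h.cl hIx hx0, hLx⟩

end

section
variable {n a : ℕ} {Y : Set (PrV n)} {X : Set (PrV a)}
    {L : (Fin n → ℂ) →ₗ[ℂ] (Fin a → ℂ)} {σ : (Fin a → ℂ) →ₗ[ℂ] (Fin n → ℂ)}
    {l : (Fin n → ℂ) →ₗ[ℂ] ℂ} {Q : Fin n → ℂ} {d : ℕ} {F : MvPolynomial (Fin n) ℂ}

lemma self_tangent (hne : Y.Nonempty) {x : Fin n → ℂ} (hx : x ∈ AC Y) : x ∈ affTangent Y x := by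
  rw [mem_affTangent]
  intro f hf
  refine jacLin_line f x x fun t _ => ?_
  have : x + t • x = (1 + t) • x := by rw [add_smul, one_smul]
  rw [this]
  by_cases h : 1 + t = 0
  · rw [h, zero_smul]; exact ideal_zero hne hf
  · exact mem_idealOf.1 hf _ (AC_smul hx h)

lemma PD.tangent_le (h : PD Y X L σ l Q d F) {x : Fin n → ℂ} :
    (affTangent Y x).map L ≤ affTangent X (L x) := by
  rintro _ ⟨ξ, hξ, rfl⟩
  rw [mem_affTangent]
  intro f hf
  have := mem_affTangent.1 hξ _ (h.ideal.1 hf)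
  rwa [pullA_jac, add_zero] at this

lemma PD.ideal_fibre (h : PD Y X L σ l Q d F) {x : Fin n → ℂ} (hx : x ∈ AC Y)
    (hQ : Q ∉ affTangent Y x) :
    ptI x ≤ idealOf Y ⊔ (ptI (L x)).map (pullA L 0) := by
  set 𝔞 := idealOf Y ⊔ (ptI (L x)).map (pullA L 0) with h𝔞
  have hIx : idealOf Y ≤ ptI x := fun f hf => mem_ptI.2 (mem_idealOf.1 hf x hx)
  -- first order
  obtain ⟨g, hg, hgQ⟩ : ∃ g ∈ idealOf Y, jacLin g x Q ≠ 0 := by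
    by_contra! hall
    exact hQ (mem_affTangent.2 hall)
  have h1 : ptI x ≤ 𝔞 ⊔ ptI x • ptI x := by
    refine ptI_le_of fun i => ?_
    rw [← linP_proj]
    let c := Q i / jacLin g x Q
    let μ : (Fin n → ℂ) →ₗ[ℂ] ℂ := LinearMap.proj i - c • jacLin g x
    have hμQ : μ Q = 0 := by
      simp only [μ, c, LinearMap.sub_apply, LinearMap.smul_apply, LinearMap.proj_apply, smul_eq_mul]
      field_simp
      ring
    have hμ : linP x μ = pullA L 0 (linP (L x) (μ.comp σ)) := by
      apply poly_ext; intro v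
      rw [linP_eval, pullA_eval, linP_eval, add_zero, ← map_sub]
      conv_lhs => rw [h.dec (v - x)]
      rw [map_add, map_smul, hμQ, smul_zero, add_zero]; rfl
    have h2 : (LinearMap.proj i : (Fin n → ℂ) →ₗ[ℂ] ℂ) = μ + c • jacLin g x := by
      simp [μ]
    rw [h2, map_add, map_smul, smul_eq_C_mul]
    refine add_mem ?_ (Ideal.mul_mem_left _ _ ?_)
    · rw [hμ]
      exact Ideal.mem_sup_left (Ideal.mem_sup_right (Ideal.mem_map_of_mem _ (linP_mem _ _)))
    · have ht := taylor x g
      rw [mem_ptI.1 (hIx hg), C_0, sub_zero, pow_two] at ht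
      have : linP x (jacLin g x) = g - (g - linP x (jacLin g x)) := by ring
      rw [this]
      exact sub_mem (Ideal.mem_sup_left (Ideal.mem_sup_left hg)) (Ideal.mem_sup_right ht)
  obtain ⟨r, hr1, hr⟩ := Submodule.exists_sub_one_mem_and_smul_le_of_fg_of_le_sup
    (IsNoetherian.noetherian (ptI x)) le_rfl h1
  have hrx : eval x r = 1 := by
    have := mem_ptI.1 hr1
    simpa [sub_eq_zero] using this
  have htop : 𝔞 ⊔ Ideal.span {r} = ⊤ := by
    by_contra hne
    obtain ⟨M, hM, hle⟩ := Ideal.exists_le_maximal _ hne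
    obtain ⟨y, rfl⟩ := max_eq_ptI M hM
    have hy1 : idealOf Y ≤ ptI y := (le_sup_left.trans le_sup_left).trans hle
    have hLy : L x = L y := by
      apply ptI_inj
      intro f hf
      have : pullA L 0 f ∈ ptI y :=
        hle (Ideal.mem_sup_left (Ideal.mem_sup_right (Ideal.mem_map_of_mem _ hf)))
      rw [mem_ptI, pullA_eval, add_zero] at this
      exact mem_ptI.2 this
    have hy0 : y ≠ 0 := by
      rintro rfl
      exact h.l0 x hx (by rw [hLy, map_zero])
    have hxy := h.inj x hx y (mem_cone_of_ideal h.cl hy1 hy0) hLy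
    have : r ∈ ptI y := hle (Ideal.mem_sup_right (Ideal.mem_span_singleton_self r))
    rw [mem_ptI, ← hxy, hrx] at this
    exact one_ne_zero this
  intro w hw
  have h1 : (1 : MvPolynomial (Fin n) ℂ) ∈ 𝔞 ⊔ Ideal.span {r} := by rw [htop]; trivial
  obtain ⟨α, hα, y, hy, hay⟩ := Submodule.mem_sup.1 h1
  obtain ⟨s, rfl⟩ := Ideal.mem_span_singleton'.1 hy
  have hrw : r * w ∈ 𝔞 := hr (Submodule.smul_mem_pointwise_smul _ _ _ hw)
  have : w = w * α + s * (r * w) := by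
    calc w = w * (α + s * r) := by rw [hay, mul_one]
      _ = _ := by ring
  rw [this]
  exact add_mem (Ideal.mul_mem_left _ _ hα) (Ideal.mul_mem_left _ _ hrw)

lemma nak_aux {R S : Type*} [CommRing R] [CommRing S] (ψ : R →+* S) (hint : ψ.Finite)
    (mm : Ideal R) (hs : ∀ s : S, ∃ c : R, s - ψ c ∈ mm.map ψ) (u : S) :
    ∃ r g : R, r - 1 ∈ mm ∧ ψ r * u = ψ g := by
  algebraize [ψ]
  have hfin : Module.Finite R S := hint
  let N : Submodule R S := LinearMap.range (Algebra.linearMap R S)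
  have hle : (⊤ : Submodule R S) ≤ N ⊔ mm • (⊤ : Submodule R S) := by
    intro s _
    obtain ⟨c, hc⟩ := hs s
    have h1 : s = ψ c + (s - ψ c) := by ring
    rw [h1]
    refine Submodule.add_mem_sup ⟨c, rfl⟩ ?_
    rw [Ideal.smul_top_eq_map]
    exact hc
  obtain ⟨r, hr1, hr⟩ := Submodule.exists_sub_one_mem_and_smul_le_of_fg_of_le_sup
    hfin.fg_top le_rfl hle
  obtain ⟨g, hg⟩ := hr (Submodule.smul_mem_pointwise_smul u r ⊤ trivial)
  refine ⟨r, g, hr1, ?_⟩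
  have h2 : ψ g = r • u := hg
  rw [h2, Algebra.smul_def]; rfl

lemma PD.finite (h : PD Y X L σ l Q d F) : (psi Y L).Finite := by
  refine RingHom.IsIntegral.to_finite h.integral ?_
  have h1 : ((psi Y L).comp (algebraMap ℂ (MvPolynomial (Fin a) ℂ))).FiniteType := by
    have : (psi Y L).comp (algebraMap ℂ (MvPolynomial (Fin a) ℂ)) =
        algebraMap ℂ (MvPolynomial (Fin n) ℂ ⧸ idealOf Y) := by
      ext c
      rw [RingHom.comp_apply, psi_apply]
      simp [algebraMap_eq, pullA]
      rfl
    rw [this]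
    exact RingHom.finiteType_algebraMap.2 inferInstance
  exact RingHom.FiniteType.of_comp_finiteType h1

lemma PD.exists_rg (h : PD Y X L σ l Q d F) {x : Fin n → ℂ} (hx : x ∈ AC Y)
    (hQ : Q ∉ affTangent Y x) : ∃ r g : MvPolynomial (Fin a) ℂ, eval (L x) r = 1 ∧
      ∀ y ∈ AC Y, eval (L y) r * l y = eval (L y) g := by
  obtain ⟨r, g, hr, hrg⟩ := nak_aux (psi Y L) h.finite (ptI (L x)) (by
    intro s
    obtain ⟨f, rfl⟩ := Ideal.Quotient.mk_surjective s
    refine ⟨C (eval x f), ?_⟩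
    have h1 : psi Y L (C (eval x f)) = Ideal.Quotient.mk (idealOf Y) (C (eval x f)) := by
      rw [psi_apply]; simp [pullA]
    rw [h1, ← map_sub]
    have h2 : f - C (eval x f) ∈ ptI x := by rw [mem_ptI]; simp
    obtain ⟨α, hα, β, hβ, hab⟩ := Submodule.mem_sup.1 (h.ideal_fibre hx hQ h2)
    rw [← hab, map_add, Ideal.Quotient.eq_zero_iff_mem.2 hα, zero_add]
    have h3 : (ptI (L x)).map (psi Y L) =
        ((ptI (L x)).map (pullA L 0).toRingHom).map (Ideal.Quotient.mk (idealOf Y)) := by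
      rw [Ideal.map_map]; rfl
    rw [h3]
    exact Ideal.mem_map_of_mem _ hβ) (Ideal.Quotient.mk (idealOf Y) (linP 0 l))
  refine ⟨r, g, ?_, ?_⟩
  · have := mem_ptI.1 hr
    simpa [sub_eq_zero] using this
  · intro y hy
    rw [psi_apply, psi_apply, ← map_mul, Ideal.Quotient.eq] at hrg
    have := mem_idealOf.1 hrg y hy
    rw [map_sub, map_mul, pullA_eval, pullA_eval, linP_eval, add_zero, sub_zero, sub_eq_zero] at this
    exact this

lemma PD.tangent_ge (h : PD Y X L σ l Q d F) {x : Fin n → ℂ} (hx : x ∈ AC Y)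
    (hQ : Q ∉ affTangent Y x) : affTangent X (L x) ≤ (affTangent Y x).map L := by
  obtain ⟨r, g, hr, hrg⟩ := h.exists_rg hx hQ
  intro ξ hξ
  let η : Fin n → ℂ := σ ξ + jacLin r (L x) ξ • σ (L x) + jacLin g (L x) ξ • Q
  have hη : η ∈ affTangent Y x := by
    rw [mem_affTangent]
    intro f hf
    let G : Fin n → MvPolynomial (Fin a) ℂ := fun i =>
      r * linP 0 ((LinearMap.proj i).comp σ) + C (Q i) * g
    have hGe : ∀ y, (fun i => eval y (G i)) = eval y r • σ y + eval y g • Q := by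
      intro y; funext i
      simp only [G, map_add, map_mul, linP_eval, eval_C]
      simp [mul_comm]
    have hH : bind₁ G f ∈ idealOf X := by
      rw [mem_idealOf]
      intro v hv
      obtain ⟨y, hy, rfl⟩ := (h.hX _).1 hv
      rw [eval_bind1, hGe, ← hrg y hy, mul_smul, ← smul_add, ← h.dec]
      by_cases h0 : eval (L y) r = 0
      · rw [h0, zero_smul]; exact ideal_zero h.ne hf
      · exact mem_idealOf.1 hf _ (AC_smul hy h0)
    have := mem_affTangent.1 hξ _ hH
    rw [jacLin_chain, hGe, ← hrg x hx, mul_smul, ← smul_add, ← h.dec, hr, one_smul] at this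
    convert this using 2
    funext i
    simp only [G]
    rw [jacLin_add, jacLin_mul, jacLin_mul, jacLin_linP, jacLin_C, hr, linP_eval]
    simp [η]
    ring
  refine ⟨η - jacLin r (L x) ξ • x, sub_mem hη (Submodule.smul_mem _ _ (self_tangent h.ne hx)), ?_⟩
  simp only [η, map_sub, map_add, map_smul, h.ls, h.lq]
  simp

lemma PD.tangent_finrank (h : PD Y X L σ l Q d F) {x : Fin n → ℂ} (hx : x ∈ AC Y)
    (hQ : Q ∉ affTangent Y x) : Module.finrank ℂ (affTangent X (L x)) =
      Module.finrank ℂ (affTangent Y x) := by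
  rw [le_antisymm (h.tangent_ge hx hQ) h.tangent_le]
  have hinj : Function.Injective (L.domRestrict (affTangent Y x)) := by
    rw [← LinearMap.ker_eq_bot, LinearMap.ker_eq_bot']
    rintro ⟨ξ, hξ⟩ h0
    have h1 : L ξ = 0 := h0
    have h2 := h.dec ξ
    rw [h1, map_zero, zero_add] at h2
    by_cases h3 : l ξ = 0
    · apply Subtype.ext
      rw [h3, zero_smul] at h2
      exact h2
    · exfalso; apply hQ
      have : Q = (l ξ)⁻¹ • ξ := by
        rw [eq_inv_smul_iff₀ h3]; exact h2.symm
      rw [this]; exact Submodule.smul_mem _ _ hξ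
  have := LinearMap.finrank_range_of_inj hinj
  rw [LinearMap.range_domRestrict] at this
  exact this

end


/-- The splitting of the coordinates. -/
def eC (rp b : ℕ) : Fin (rp + 1) ⊕ Fin (b + 1) ≃ Fin (rp + b + 2) :=
  finSumFinEquiv.trans (finCongr (by omega))

lemma eC_inl (rp b : ℕ) (i : Fin (rp + 1)) : eC rp b (Sum.inl i) =
    Fin.castLE (show rp + 1 ≤ rp + b + 2 by omega) i := by
  ext; simp [eC]

lemma prF_eq (rp b : ℕ) : prF (eC rp b) = LinearMap.funLeft ℂ ℂ
    (Fin.castLE (show rp + 1 ≤ rp + b + 2 by omega)) := by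
  unfold prF
  congr 1

lemma pad_eq (rp b : ℕ) (z : Fin (rp + 1) → ℂ) :
    padMap (rp + 1) (rp + b + 2) z = inF (eC rp b) z := by
  funext j
  obtain ⟨s, rfl⟩ := (eC rp b).surjective j
  rcases s with i | i
  · have h1 : inF (eC rp b) z (eC rp b (Sum.inl i)) = z i := by simp [inF]
    rw [h1, eC_inl]
    have := i.2
    simp [padMap]
    intro h; omega
  · simp [padMap, inF, eC]
    intro h; omega

lemma isCone_coneOver (rp b : ℕ) (Z : Set (Pr rp)) (hne : Z.Nonempty) :
    IsCone (eC rp b) Z (coneOver rp b Z) := by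
  intro x
  constructor
  · rintro ⟨hx, h⟩
    refine ⟨hx, ?_⟩
    simp only [coneOver, joinSets, Set.mem_iUnion] at h
    obtain ⟨_, ⟨z, hz, rfl⟩, y, hy, h⟩ := h
    obtain ⟨c, hc, hcx⟩ := exists_rep_smul hx
    obtain ⟨c', hc', hcz⟩ := exists_rep_smul (padMap_ne_zero
      (show rp + 1 ≤ rp + b + 2 by omega) z.rep_nonzero)
    change _ ∈ Submodule.span ℂ _ at h
    obtain ⟨α, β, h⟩ := Submodule.mem_span_pair.1 h
    have hy0 : prF (eC rp b) y.rep = 0 := by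
      rw [prF_eq]; exact hy
    have h1 : (embPt (show rp + 1 ≤ rp + b + 2 by omega) z).rep = c' • inF (eC rp b) z.rep := by
      rw [← pad_eq]; exact hcz
    have h2 := congrArg (prF (eC rp b)) h
    rw [h1, hcx, map_add, map_smul, map_smul, map_smul, map_smul, prF_inF, hy0, smul_zero,
      add_zero] at h2
    have h3 : prF (eC rp b) x = (c⁻¹ * α * c') • z.rep := by
      rw [mul_assoc, mul_smul, mul_smul, h2, inv_smul_smul₀ hc]
    by_cases h0 : c⁻¹ * α * c' = 0
    · left; rw [h3, h0, zero_smul]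
    · right; rw [h3]; exact AC_smul (rep_mem_AC.2 hz) h0
  · rintro ⟨hx, h⟩
    refine ⟨hx, ?_⟩
    simp only [coneOver, joinSets, Set.mem_iUnion]
    obtain ⟨c, hc, hcx⟩ := exists_rep_smul hx
    have hvert : ∀ t (ht : inS (eC rp b) t ≠ 0), Projectivization.mk ℂ _ ht ∈
        projSub (LinearMap.ker (LinearMap.funLeft ℂ ℂ
          (Fin.castLE (show rp + 1 ≤ rp + b + 2 by omega)))) := by
      intro t ht
      obtain ⟨c, hc, hcx⟩ := exists_rep_smul ht
      change _ ∈ LinearMap.ker _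
      rw [hcx, ← prF_eq, LinearMap.mem_ker, map_smul, prF_inS, smul_zero]
    rcases h with h | h
    · obtain ⟨z, hz⟩ := hne
      obtain ⟨t, rfl⟩ := dec_ker _ h
      exact ⟨_, ⟨z, hz, rfl⟩, Projectivization.mk ℂ _ hx, hvert t hx,
        Submodule.subset_span (by simp)⟩
    · obtain ⟨hz0, hz⟩ := h
      obtain ⟨t, ht⟩ := dec (eC rp b) x
      obtain ⟨t', ht', s, hs⟩ : ∃ t', inS (eC rp b) t' ≠ 0 ∧ ∃ s : ℂ,
          inS (eC rp b) t = s • inS (eC rp b) t' := by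
        by_cases h0 : inS (eC rp b) t = 0
        · refine ⟨fun _ => 1, ?_, 0, by rw [h0, zero_smul]⟩
          intro h1
          have := inS_inj (eC rp b) (h1.trans (map_zero _).symm)
          exact one_ne_zero (congrFun this 0)
        · exact ⟨t, h0, 1, by rw [one_smul]⟩
      refine ⟨_, ⟨_, hz, rfl⟩, _, hvert t' ht', ?_⟩
      obtain ⟨c1, hc1, hcz⟩ := exists_rep_smul hz0
      obtain ⟨c2, hc2, hcy⟩ := exists_rep_smul ht'
      obtain ⟨c3, hc3, hce⟩ := exists_rep_smul (padMap_ne_zero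
        (show rp + 1 ≤ rp + b + 2 by omega) (Projectivization.mk ℂ _ hz0).rep_nonzero)
      have h1 : (embPt (show rp + 1 ≤ rp + b + 2 by omega) (Projectivization.mk ℂ _ hz0)).rep =
          (c3 * c1) • inF (eC rp b) (prF (eC rp b) x) := by
        rw [mul_smul, ← map_smul, ← hcz, ← pad_eq]; exact hce
      change _ ∈ Submodule.span ℂ _
      rw [hcx, h1, hcy]
      refine Submodule.smul_mem _ _ (Submodule.mem_span_pair.2 ⟨(c3 * c1)⁻¹, s * c2⁻¹, ?_⟩)
      rw [inv_smul_smul₀ (mul_ne_zero hc3 hc1), mul_smul, inv_smul_smul₀ hc2, ← hs, ← ht]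

lemma AC_projImage {a n : ℕ} (w : Fin a × Fin n → ℂ) (Y : Set (PrV n))
    (h0 : ∀ x ∈ AC Y, matLin w x ≠ 0) (v : Fin a → ℂ) :
    v ∈ AC (projImage w Y) ↔ ∃ x ∈ AC Y, v = matLin w x := by
  constructor
  · rintro ⟨hv, x, hx, c, hc, h⟩
    obtain ⟨c', hc', hcv⟩ := exists_rep_smul hv
    refine ⟨(c'⁻¹ * c) • x.rep, AC_smul (rep_mem_AC.2 hx) (mul_ne_zero (inv_ne_zero hc') hc), ?_⟩
    rw [map_smul, mul_smul, ← h, hcv, inv_smul_smul₀ hc']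
  · rintro ⟨x, hx, rfl⟩
    have hv := h0 x hx
    refine ⟨hv, ?_⟩
    obtain ⟨hx0, hxY⟩ := hx
    obtain ⟨c, hc, hcx⟩ := exists_rep_smul hx0
    obtain ⟨c', hc', hcv⟩ := exists_rep_smul hv
    refine ⟨_, hxY, c' * c⁻¹, mul_ne_zero hc' (inv_ne_zero hc), ?_⟩
    rw [hcv, hcx, map_smul, mul_smul, inv_smul_smul₀ hc]

lemma smooth_iff {n k : ℕ} {Y : Set (PrV n)} (hk : pdim Y = ((k : ℕ∞) : WithBot ℕ∞))
    {v : Fin n → ℂ} (hv : v ≠ 0) : IsSmoothPt Y (Projectivization.mk ℂ v hv) ↔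
      Module.finrank ℂ (affTangent Y v) = k + 1 := by
  obtain ⟨c, hc, hcv⟩ := exists_rep_smul hv
  rw [IsSmoothPt, hcv, affTangent_smul _ _ hc, hk]
  constructor
  · intro h; exact_mod_cast h
  · intro h; rw [h]; push_cast; rfl

lemma main_core (rp b m : ℕ) (Z : Set (Pr rp))
    (hcl : IsClosed Z) (hirr : IsIrreducible Z) (hsm : IsSmoothSet Z)
    (hnd : NondegenerateSet Z)
    (hdim : pdim Z = ((m : ℕ∞) : WithBot ℕ∞))
    (hseveri : 3 * m + 4 = 2 * rp) (d : ℕ) (f : MvPolynomial (Fin (rp + 1)) ℂ)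
    (hf : f.IsHomogeneous d)
    (hfZ : ∀ y ∈ AC Z, ∀ z ∈ AC Z, ∀ a c : ℂ, eval (a • y + c • z) f = 0)
    (w : Fin (rp + b + 1) × Fin (rp + b + 2) → ℂ) (Q : Fin (rp + b + 2) → ℂ)
    (hQ0 : matLin w Q = 0) (hQf : eval (prF (eC rp b) Q) f ≠ 0)
    (hsurj : Function.Surjective (matLin w))
    (h0 : ∀ x ∈ coneOver rp b Z, matLin w x.rep ≠ 0)
    (hinj : ∀ x ∈ coneOver rp b Z, ∀ y ∈ coneOver rp b Z,
          (∃ c : ℂ, matLin w x.rep = c • matLin w y.rep) → x = y) :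
      pdim (projImage w (coneOver rp b Z)) = (((m + b + 1 : ℕ) : ℕ∞) : WithBot ℕ∞) ∧
      3 * (m + b + 1) = 2 * (rp + b) + b - 1 ∧
      pdim (singLocus (projImage w (coneOver rp b Z))) = ((b : ℕ∞) : WithBot ℕ∞) ∧
      ¬ LinearlyNormal (projImage w (coneOver rp b Z)) := by
  have hcone := isCone_coneOver rp b Z hirr.1
  set e := eC rp b with he
  set Y := coneOver rp b Z with hYdef
  set L := matLin w with hL
  have hne : Z.Nonempty := hirr.1
  have hprY : (idealOf Y).IsPrime := cone_prime hcone hirr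
  have hclY : IsClosed Y := cone_closed hcone hne hcl
  have hneY : Y.Nonempty := by
    obtain ⟨z, hz⟩ := hne
    have : inF e z.rep ∈ AC Y := (hcone _).2 ⟨fun h => z.rep_nonzero (by
      rw [← prF_inF e z.rep, h, map_zero]), Or.inr (by rw [prF_inF]; exact rep_mem_AC.2 hz)⟩
    exact ⟨_, this.2⟩
  have hl0 : ∀ x ∈ AC Y, L x ≠ 0 := by
    rintro x ⟨hx, hxY⟩ hLx
    obtain ⟨c, hc, hcx⟩ := exists_rep_smul hx
    apply h0 _ hxY
    rw [hcx, map_smul, hLx, smul_zero]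
  have hinj' : ∀ x ∈ AC Y, ∀ y ∈ AC Y, L x = L y → x = y := by
    rintro x hxA y hyA hxy
    obtain ⟨hx, hxY⟩ := hxA
    obtain ⟨hy, hyY⟩ := id hyA
    obtain ⟨c, hc, hcx⟩ := exists_rep_smul hx
    obtain ⟨c', hc', hcy⟩ := exists_rep_smul hy
    have h1 := hinj _ hxY _ hyY ⟨c * c'⁻¹, by
      rw [hcx, hcy, map_smul, map_smul, hxy, mul_smul, inv_smul_smul₀ hc']⟩
    obtain ⟨s, hs⟩ := (Projectivization.mk_eq_mk_iff' ℂ _ _ hx hy).1 h1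
    have h2 : (s - 1) • L y = 0 := by
      rw [sub_smul, one_smul, ← map_smul, hs, hxy, sub_self]
    rcases smul_eq_zero.1 h2 with h3 | h3
    · rw [← hs, sub_eq_zero.1 h3, one_smul]
    · exact absurd h3 (hl0 y hyA)
  have hf0 : eval 0 f = 0 := by
    obtain ⟨z, hz⟩ := hne
    have := hfZ _ (rep_mem_AC.2 hz) _ (rep_mem_AC.2 hz) 0 0
    simpa using this
  have hQne : Q ≠ 0 := by
    rintro rfl
    rw [map_zero] at hQf
    exact hQf hf0
  -- the splitting
  obtain ⟨σ, hσ⟩ := LinearMap.exists_rightInverse_of_surjective L (LinearMap.range_eq_top.2 hsurj)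
  have hσ' : ∀ y, L (σ y) = y := fun y => LinearMap.congr_fun hσ y
  obtain ⟨lam, hlam⟩ : ∃ μ : Module.Dual ℂ (Fin (rp + b + 2) → ℂ), μ Q = 1 :=
    Module.Projective.exists_dual_eq_one ℂ hQne
  have hker : ∀ x, L x = 0 → ∃ c : ℂ, c • Q = x := by
    have h1 := LinearMap.finrank_range_add_finrank_ker L
    rw [LinearMap.range_eq_top.2 hsurj, finrank_top, Module.finrank_fin_fun,
      Module.finrank_fin_fun] at h1
    have h2 : Module.finrank ℂ (LinearMap.ker L) = 1 := by omega
    intro x hx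
    obtain ⟨c, hc⟩ := (finrank_eq_one_iff_of_nonzero' (⟨Q, hQ0⟩ : LinearMap.ker L)
      (fun h => hQne (congrArg Subtype.val h))).1 h2 ⟨x, hx⟩
    exact ⟨c, congrArg Subtype.val hc⟩
  let l : (Fin (rp + b + 2) → ℂ) →ₗ[ℂ] ℂ := lam.comp (LinearMap.id - σ.comp L)
  have hdec : ∀ x, x = σ (L x) + l x • Q := by
    intro x
    obtain ⟨c, hc⟩ := hker (x - σ (L x)) (by rw [map_sub, hσ', sub_self])
    have : l x = c := by
      change lam (x - σ (L x)) = c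
      rw [← hc, map_smul, hlam, smul_eq_mul, mul_one]
    rw [this, hc]; abel
  let F : MvPolynomial (Fin (rp + b + 2)) ℂ :=
    C (eval (prF e Q) f)⁻¹ * pullA (prF e) 0 f
  have hAC := AC_projImage w Y hl0
  have hPD : PD Y (projImage w Y) L σ l Q d F :=
    { cl := hclY, pr := hprY, ne := hneY, ls := hσ', lq := hQ0, dec := hdec
      hF := by
        refine Ideal.mul_mem_left _ _ (cone_pull hcone hne ?_)
        rw [mem_idealOf]
        intro z hz
        have := hfZ z hz z hz 1 0
        simpa using this
      hd := by
        have h1 : pullA (prF e) 0 f = rename (fun i => e (Sum.inl i)) f := by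
          apply poly_ext; intro v
          rw [pullA_eval, eval_rename, add_zero]
          rfl
        have := (isHomogeneous_C (Fin (rp + b + 2)) (eval (prF e Q) f)⁻¹).mul
          (hf.rename_isHomogeneous (f := fun i => e (Sum.inl i)))
        rw [zero_add] at this
        change IsHomogeneous (_ * _) d
        rw [h1]; exact this
      hFQ := by
        rw [map_mul, eval_C, pullA_eval, add_zero, inv_mul_cancel₀ hQf]
      inj := hinj', l0 := hl0, hX := hAC }
  set X := projImage w Y with hXdef
  -- dimensions
  have hZd : ringKrullDim (MvPolynomial (Fin (rp + 1)) ℂ ⧸ idealOf Z) = (m + 1 : ℕ) := by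
    rw [← pdim_add_one hcl hirr, hdim]; rfl
  have hXd : pdim X = (((m + b + 1 : ℕ) : ℕ∞) : WithBot ℕ∞) := by
    have h1 := pdim_add_one hPD.closed (irred_of_prime hPD.nonempty hPD.prime)
    rw [← hPD.krull, cone_dim hcone hirr, hZd] at h1
    have h2 : pdim X + 1 = (((m + b + 1 : ℕ) : ℕ∞) : WithBot ℕ∞) + 1 := by
      rw [h1]
      have h3 : m + 1 + (b + 1) = m + b + 1 + 1 := by omega
      have h4 := congrArg (fun k : ℕ => ((k : ℕ∞) : WithBot ℕ∞)) h3
      exact_mod_cast h4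
    exact le_antisymm (wb_cancel h2.le) (wb_cancel h2.ge)
  have hZt : ∀ z ∈ AC Z, Module.finrank ℂ (affTangent Z z) = m + 1 := by
    intro z hz
    exact (smooth_iff hdim hz.1).1 (hsm _ hz.2)
  have hQt : ∀ x, prF e x ∈ AC Z → Q ∉ affTangent Y x := by
    intro x hx hQ
    refine hQf (tangent_sec hcl hirr hx (hZt _ hx) hZd hf ?_ (cone_tangent hcone hne hQ))
    intro y hy
    have := hfZ y hy _ hx 1 (-1)
    rw [sub_eq_add_neg]
    simpa using this
  have hsing : ∀ v, v ∈ AC (singLocus X) ↔ v ≠ 0 ∧ ∃ t, v = (L.comp (inS e)) t := by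
    intro v
    have hs : ∀ x (hx : x ∈ AC Y), IsSmoothPt X (Projectivization.mk ℂ (L x) (hl0 x hx)) ↔
        prF e x ∈ AC Z := by
      intro x hx
      rw [smooth_iff hXd]
      obtain ⟨hx0, hx1 | hx1⟩ := (hcone x).1 hx
      · have htop : affTangent X (L x) = ⊤ := by
          rw [eq_top_iff]
          intro ξ _
          refine hPD.tangent_le ⟨σ ξ, cone_vertex hcone hne hnd hx1, hσ' ξ⟩
        rw [htop, finrank_top, Module.finrank_fin_fun]
        constructor
        · intro h; omega
        · intro h; exact absurd hx1 (AC_ne h)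
      · refine iff_of_true ?_ hx1
        rw [hPD.tangent_finrank hx (hQt x hx1), cone_tangent_finrank hcone hne hx1, hZt _ hx1]
        omega
    constructor
    · rintro ⟨hv, hvX, hvs⟩
      refine ⟨hv, ?_⟩
      obtain ⟨x, hx, rfl⟩ := (hAC v).1 ⟨hv, hvX⟩
      have h1 : prF e x ∉ AC Z := fun h => hvs ⟨hvX, (hs x hx).2 h⟩
      obtain ⟨t, ht⟩ := dec_ker e (((hcone x).1 hx).2.resolve_right h1)
      exact ⟨t, by rw [ht]; rfl⟩
    · rintro ⟨hv, t, rfl⟩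
      have hx : inS e t ∈ AC Y := (hcone _).2 ⟨fun h => hv (by
        rw [LinearMap.comp_apply, h, map_zero]), Or.inl (by simp)⟩
      refine ⟨hv, ((hAC _).2 ⟨_, hx, rfl⟩).2, fun h => ?_⟩
      have := (hs _ hx).1 h.2
      rw [prF_inS] at this
      exact AC_ne this rfl
  refine ⟨hXd, by omega, ?_, ?_⟩
  · refine pdim_linear (L.comp (inS e)) ?_ hsing
    rw [← LinearMap.ker_eq_bot, LinearMap.ker_eq_bot']
    intro t ht
    by_contra ht0
    have hx : inS e t ∈ AC Y := (hcone _).2 ⟨fun h => ht0 (inS_inj e (by rw [h, map_zero])),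
      Or.inl (by simp)⟩
    exact hl0 _ hx ht
  · intro hln
    exact hln ⟨Y, hclY, irred_of_prime hneY hprY, cone_nondeg hcone hnd, L, hsurj, h0, rfl, hinj⟩



lemma aff_basis (σ : Type) : @TopologicalSpace.IsTopologicalBasis _ (affTop σ)
    {U | ∃ f : MvPolynomial σ ℂ, U = {v | eval v f ≠ 0}} := by
  letI := affTop σ
  refine ⟨?_, ?_, rfl⟩
  · rintro _ ⟨f, rfl⟩ _ ⟨g, rfl⟩ x hx
    refine ⟨_, ⟨f * g, rfl⟩, ?_, ?_⟩
    · simpa using hx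
    · intro y hy
      simpa using hy
  · rw [Set.sUnion_eq_univ_iff]
    intro x
    exact ⟨_, ⟨1, rfl⟩, by simp⟩

lemma aff_open {σ : Type} (g : MvPolynomial σ ℂ) :
    @IsOpen _ (affTop σ) {v | eval v g ≠ 0} :=
  TopologicalSpace.GenerateOpen.basic _ ⟨g, rfl⟩

lemma aff_dense {σ : Type} (g : MvPolynomial σ ℂ) (hg : g ≠ 0) :
    @Dense _ (affTop σ) {v | eval v g ≠ 0} := by
  letI := affTop σ
  rw [(aff_basis σ).dense_iff]
  rintro _ ⟨h, rfl⟩ ⟨v, hv⟩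
  have hh : h ≠ 0 := by rintro rfl; simp at hv
  by_contra hcon
  apply mul_ne_zero hh hg
  apply MvPolynomial.funext
  intro x
  by_contra hx
  apply hcon
  rw [map_mul, map_zero] at hx
  exact ⟨x, left_ne_zero_of_mul hx, right_ne_zero_of_mul hx⟩

/-- The square matrix with rows of `w` and last row `l`. -/
def sqM {R : Type*} {n : ℕ} (l : Fin (n + 1) → R) (w : Fin n × Fin (n + 1) → R) :
    Matrix (Fin (n + 1)) (Fin (n + 1)) R :=
  Matrix.of (Fin.snoc (α := fun _ => Fin (n + 1) → R) (fun i j => w (i, j)) l)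

/-- The kernel vector. -/
def kerV {R : Type*} [CommRing R] {n : ℕ} (l : Fin (n + 1) → R) (w : Fin n × Fin (n + 1) → R) :
    Fin (n + 1) → R := fun j => (sqM l w).adjugate j (Fin.last n)

lemma matLin_kerV {n : ℕ} (l : Fin (n + 1) → ℂ) (w : Fin n × Fin (n + 1) → ℂ) :
    matLin w (kerV l w) = 0 := by
  funext i
  have h := congrFun (congrFun (Matrix.mul_adjugate (sqM l w)) i.castSucc) (Fin.last n)
  have h2 : (matLin w (kerV l w)) i = (sqM l w * (sqM l w).adjugate) i.castSucc (Fin.last n) := by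
    simp [matLin, Matrix.mulVec, dotProduct, Matrix.mul_apply, kerV, sqM]
  rw [h2, h]
  simp [Matrix.one_apply, (Fin.castSucc_lt_last i).ne]

lemma kerV_poly {n : ℕ} (l : Fin (n + 1) → ℂ) (w : Fin n × Fin (n + 1) → ℂ) (j : Fin (n + 1)) :
    eval w (kerV (fun j => C (l j)) (fun p => (X p : MvPolynomial _ ℂ)) j) = kerV l w j := by
  unfold kerV
  have h := RingHom.map_adjugate (eval w)
    (sqM (fun j => C (l j)) (fun p : Fin n × Fin (n + 1) => (X p : MvPolynomial _ ℂ)))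
  have h2 : (eval w).mapMatrix (sqM (fun j => C (l j))
      (fun p : Fin n × Fin (n + 1) => (X p : MvPolynomial _ ℂ))) = sqM l w := by
    ext i k
    refine Fin.lastCases ?_ (fun i => ?_) i <;> simp [sqM]
  rw [h2] at h
  rw [← h]; rfl

lemma exists_kerV {n : ℕ} (Q : Fin (n + 1) → ℂ) (hQ : Q ≠ 0) :
    ∃ (l : Fin (n + 1) → ℂ) (w : Fin n × Fin (n + 1) → ℂ) (c : ℂ), c ≠ 0 ∧ kerV l w = c • Q := by
  obtain ⟨A, hA⟩ := SeparatingDual.exists_continuousLinearEquiv_apply_eq (R := ℂ) hQ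
    (y := (Pi.single (Fin.last n) (1 : ℂ) : Fin (n + 1) → ℂ)) (by simp)
  set M := LinearMap.toMatrix' (A.toLinearEquiv : (Fin (n + 1) → ℂ) →ₗ[ℂ] (Fin (n + 1) → ℂ))
  have hM : M.mulVec Q = Pi.single (Fin.last n) (1 : ℂ) := by
    rw [← hA]; simp [M, LinearMap.toMatrix'_mulVec]
  have hdet : M.det ≠ 0 := by
    have := LinearEquiv.isUnit_det' A.toLinearEquiv
    rw [← LinearMap.det_toMatrix'] at this
    exact this.ne_zero
  have hs : sqM (M (Fin.last n)) (fun p => M p.1.castSucc p.2) = M := by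
    ext i k
    refine Fin.lastCases ?_ (fun i => ?_) i <;> simp [sqM]
  refine ⟨M (Fin.last n), fun p => M p.1.castSucc p.2, M.det, hdet, ?_⟩
  have h1 : M.adjugate.mulVec (M.mulVec Q) = M.det • Q := by
    rw [Matrix.mulVec_mulVec, Matrix.adjugate_mul, Matrix.smul_mulVec, Matrix.one_mulVec]
  rw [← h1, hM]
  funext j
  rw [kerV, hs]; simp

/-- **(Remark 3: sharpness of Corollary 4.)**  Let `Z ⊆ ℙ^{r'}` be a smooth Severi
variety (smooth, irreducible, nondegenerate, projectable, `dim Z = (2/3)(r'-2)`, i.e.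
`3 dim Z + 4 = 2 r'`), let `b ≥ 0`, set `N = r' + b`, let `Z' ⊆ ℙ^{N+1}` be the cone over
`Z` with vertex a linear `ℙ^b`, and let `X ⊆ ℙ^N` be the generic (isomorphic) projection
of `Z'`.  Then `dim X = (1/3)(2N + b - 1)` (indeed `dim X = dim Z + b + 1` and
`3 (dim Z + b + 1) = 2N + b - 1`), `dim Sing(X) = b`, and `X` is not linearly normal.
In particular the bound `dim X > (1/3)(2N + b - 1)` in Corollary 4 is sharp. -/
theorem severi_cone_projection_not_linearly_normal
    (rp b m : ℕ) (Z : Set (Pr rp))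
    (hcl : IsClosed Z) (hirr : IsIrreducible Z) (hsm : IsSmoothSet Z)
    (hnd : NondegenerateSet Z)
    (hproj : secantVariety Z ≠ Set.univ)
    (hdim : pdim Z = ((m : ℕ∞) : WithBot ℕ∞))
    (hseveri : 3 * m + 4 = 2 * rp) :
    GenericAff fun w : Fin (rp + b + 1) × Fin (rp + b + 2) → ℂ =>
      (Function.Surjective (matLin w) ∧
        (∀ x ∈ coneOver rp b Z, matLin w x.rep ≠ 0) ∧
        (∀ x ∈ coneOver rp b Z, ∀ y ∈ coneOver rp b Z,
          (∃ c : ℂ, matLin w x.rep = c • matLin w y.rep) → x = y)) →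
      pdim (projImage w (coneOver rp b Z)) = (((m + b + 1 : ℕ) : ℕ∞) : WithBot ℕ∞) ∧
      3 * (m + b + 1) = 2 * (rp + b) + b - 1 ∧
      pdim (singLocus (projImage w (coneOver rp b Z))) = ((b : ℕ∞) : WithBot ℕ∞) ∧
      ¬ LinearlyNormal (projImage w (coneOver rp b Z)) := by

  obtain ⟨d, f, hf, ⟨Q0, hQ0⟩, hfZ⟩ := secant_poly (show 2 ≤ rp + 1 by omega) hirr.1 hnd hproj
  obtain ⟨z, hz⟩ := hirr.1
  have hQ0' : inF (eC rp b) Q0 ≠ 0 := by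
    intro h
    have h1 : Q0 = 0 := by rw [← prF_inF (eC rp b) Q0, h, map_zero]
    apply hQ0
    have := hfZ _ (rep_mem_AC.2 hz) _ (rep_mem_AC.2 hz) 0 0
    rw [h1]
    simpa using this
  obtain ⟨l, w0, c, hc, hk⟩ := exists_kerV (n := rp + b + 1) (inF (eC rp b) Q0) hQ0'
  set g : MvPolynomial (Fin (rp + b + 1) × Fin (rp + b + 2)) ℂ :=
    bind₁ (fun i => kerV (n := rp + b + 1) (fun j => C (l j)) (fun p => X p)
      (eC rp b (Sum.inl i))) f with hg
  have hev : ∀ w, eval w g = eval (prF (eC rp b) (kerV (n := rp + b + 1) l w)) f := by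
    intro w
    have h1 : eval w g = eval (fun i => eval w (kerV (n := rp + b + 1) (fun j => C (l j))
        (fun p => X p) (eC rp b (Sum.inl i)))) f := by
      simpa [coe_aeval_eq_eval] using aeval_bind₁ (R := ℂ) w _ f
    rw [h1]
    congr 2
    funext i
    exact kerV_poly l w _
  have hg0 : g ≠ 0 := by
    intro h
    have h1 := hev w0
    rw [h, map_zero, hk, map_smul, prF_inF] at h1
    have h2 := aeval_homog hf c Q0
    rw [aeval_eq_eval, aeval_eq_eval] at h2
    exact mul_ne_zero (pow_ne_zero d hc) hQ0 (h2.symm.trans h1.symm)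
  refine ⟨_, aff_open g, aff_dense g hg0, ?_⟩
  rintro w hw ⟨hsurj, h0, hinj⟩
  exact main_core rp b m Z hcl hirr hsm hnd hdim hseveri d f hf hfZ w
    (kerV (n := rp + b + 1) l w) (matLin_kerV l w) (by rw [← hev]; exact hw) hsurj h0 hinj

end
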